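/- arXiv:1010.2296 — 8 statements merged into one kernel-verified Lean document; each statement's English description precedes it below -/
import Mathlib

section
/- There exists a finite connected simple chordal graph G with no bridges such that rc(G) = 3 · rad(G). -/
open SimpleGraph Set

/-- The predicate that an edge colouring `c` makes `G` rainbow connected: every pair of
vertices is joined by a path no two of whose edges receive the same colour. -/
def RainbowConnectedUnder {V : Type*} (G : SimpleGraph V) (c : Sym2 V → ℕ) : Prop :=
  ∀ u v : V, ∃ p : G.Walk u v, p.IsPath ∧ (p.edges.map c).Nodup

/-- The rainbow connection number of `G`: the least `n` such that some edge colouring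
using colours `< n` makes `G` rainbow connected. -/
noncomputable def rc {V : Type*} (G : SimpleGraph V) : ℕ :=
  sInf {n | ∃ c : Sym2 V → ℕ, (∀ e ∈ G.edgeSet, c e < n) ∧ RainbowConnectedUnder G c}

/-- Degree of a vertex (as the cardinality of its neighbour set). -/
noncomputable def deg {V : Type*} (G : SimpleGraph V) (v : V) : ℕ := (G.neighborSet v).ncard

/-- `D` is a dominating set of `G`. -/
def IsDominatingSet {V : Type*} (G : SimpleGraph V) (D : Set V) : Prop :=
  ∀ v : V, v ∈ D ∨ ∃ u ∈ D, G.Adj u v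

/-- The connected domination number of `G`. -/
noncomputable def connDomNum {V : Type*} (G : SimpleGraph V) : ℕ :=
  sInf {n | ∃ D : Set V, D.ncard = n ∧ IsDominatingSet G D ∧ (G.induce D).Connected}

/-- Distance of a vertex `v` to a set of vertices `D`. -/
noncomputable def distSet {V : Type*} (G : SimpleGraph V) (D : Set V) (v : V) : ℕ :=
  sInf ((fun u => G.dist u v) '' D)

/-- Diameter of `G`. -/
noncomputable def graphDiam {V : Type*} (G : SimpleGraph V) : ℕ :=
  sSup (Set.range fun p : V × V => G.dist p.1 p.2)

/-- Eccentricity of a vertex. -/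
noncomputable def ecc {V : Type*} (G : SimpleGraph V) (v : V) : ℕ :=
  sSup (Set.range fun u => G.dist v u)

/-- Radius of `G`. -/
noncomputable def graphRadius {V : Type*} (G : SimpleGraph V) : ℕ :=
  sInf (Set.range fun v => ecc G v)

/-- `G` is an interval graph: vertices can be assigned nonempty closed real intervals such
that two distinct vertices are adjacent iff their intervals intersect. -/
def IsIntervalGraph {V : Type*} (G : SimpleGraph V) : Prop :=
  ∃ a b : V → ℝ, (∀ v, a v ≤ b v) ∧
    ∀ u v : V, u ≠ v → (G.Adj u v ↔ (Set.Icc (a u) (b u) ∩ Set.Icc (a v) (b v)).Nonempty)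

/-- `G` is a unit interval graph. -/
def IsUnitIntervalGraph {V : Type*} (G : SimpleGraph V) : Prop :=
  ∃ a : V → ℝ,
    ∀ u v : V, u ≠ v →
      (G.Adj u v ↔ (Set.Icc (a u) (a u + 1) ∩ Set.Icc (a v) (a v + 1)).Nonempty)

/-- `G` is a circular arc graph: vertices can be assigned nonempty closed arcs of a circle
(images of closed intervals in `AddCircle 1`) such that two distinct vertices are adjacent
iff their arcs intersect. -/
def IsCircularArcGraph {V : Type*} (G : SimpleGraph V) : Prop :=
  ∃ a b : V → ℝ, (∀ v, a v ≤ b v) ∧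
    ∀ u v : V, u ≠ v → (G.Adj u v ↔
      (((fun x : ℝ => (x : AddCircle (1:ℝ))) '' Set.Icc (a u) (b u)) ∩
        ((fun x : ℝ => (x : AddCircle (1:ℝ))) '' Set.Icc (a v) (b v))).Nonempty)

/-- There is a path from `x` to `y` avoiding the closed neighbourhood of `z`. -/
def HasAvoidingPath {V : Type*} (G : SimpleGraph V) (x y z : V) : Prop :=
  ∃ p : G.Walk x y, p.IsPath ∧ ∀ w ∈ p.support, w ≠ z ∧ ¬ G.Adj z w

/-- `G` is AT-free: it has no asteroidal triple. -/
def IsATFree {V : Type*} (G : SimpleGraph V) : Prop :=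
  ¬ ∃ x y z : V, x ≠ y ∧ y ≠ z ∧ x ≠ z ∧ ¬G.Adj x y ∧ ¬G.Adj y z ∧ ¬G.Adj x z ∧
    HasAvoidingPath G x y z ∧ HasAvoidingPath G y z x ∧ HasAvoidingPath G x z y

/-- `G` is a threshold graph. -/
def IsThresholdGraph {V : Type*} (G : SimpleGraph V) : Prop :=
  ∃ (w : V → ℝ) (t : ℝ), ∀ u v : V, u ≠ v → (G.Adj u v ↔ t ≤ w u + w v)

/-- `G` is a chain graph: bipartite with the neighbourhoods of one side linearly ordered
by inclusion. -/
def IsChainGraph {V : Type*} (G : SimpleGraph V) : Prop :=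
  ∃ A B : Set V, A ∪ B = Set.univ ∧ Disjoint A B ∧
    (∀ u v : V, G.Adj u v → ¬(u ∈ A ∧ v ∈ A) ∧ ¬(u ∈ B ∧ v ∈ B)) ∧
    ∀ a₁ ∈ A, ∀ a₂ ∈ A,
      G.neighborSet a₁ ⊆ G.neighborSet a₂ ∨ G.neighborSet a₂ ⊆ G.neighborSet a₁

/-- `G` is chordal: it has no induced cycle of length greater than 3. -/
def IsChordal {V : Type*} (G : SimpleGraph V) : Prop :=
  ∀ n : ℕ, 4 ≤ n → IsEmpty (SimpleGraph.cycleGraph n ↪g G)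

/-- The windmill of three triangles sharing the vertex `0`. -/
def windmill : SimpleGraph (Fin 7) where
  Adj u v := u ≠ v ∧ (u = 0 ∨ v = 0 ∨ (u.val + 1) / 2 = (v.val + 1) / 2)
  symm := ⟨by decide⟩
  loopless := ⟨by decide⟩

instance : DecidableRel windmill.Adj := fun u v => by
  unfold windmill; infer_instance

/-- A rainbow colouring of the windmill with three colours. -/
def windmillCol : Sym2 (Fin 7) → ℕ :=
  Sym2.lift ⟨fun u v => if u = 0 ∨ v = 0 then (u.val + v.val) % 2 else 2, by decide⟩

lemma windmill_connected : windmill.Connected := by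
  refine (SimpleGraph.connected_iff_exists_forall_reachable _).2 ⟨0, fun w => ?_⟩
  by_cases h : w = 0
  · subst h; exact Reachable.refl _
  · exact Adj.reachable (by revert w; decide)

lemma cycle_adj_of_lt {n : ℕ} (u v : Fin n) (h : u < v) :
    (cycleGraph n).Adj u v ↔ v.val - u.val = 1 ∨ n + u.val - v.val = 1 := by
  rw [cycleGraph_adj', Fin.coe_sub_iff_lt.2 h, Fin.sub_val_of_le h.le]
  tauto

lemma windmill_chordal : IsChordal windmill := by
  intro n hn
  obtain ⟨m, rfl⟩ := Nat.exists_eq_add_of_le' hn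
  refine ⟨fun f => ?_⟩
  have key : ∀ a b c : Fin 7, windmill.Adj a b → windmill.Adj b c → a ≠ c →
      ¬ windmill.Adj a c → b = 0 := by decide
  have mk : ∀ i j k : Fin (m + 4), (cycleGraph (m + 4)).Adj i j → (cycleGraph (m + 4)).Adj j k →
      i ≠ k → ¬ (cycleGraph (m + 4)).Adj i k → f j = 0 := fun i j k h1 h2 h3 h4 =>
    key (f i) (f j) (f k) (f.map_adj_iff.2 h1) (f.map_adj_iff.2 h2)
      (fun h => h3 (f.injective h)) (fun h => h4 (f.map_adj_iff.1 h))
  have h1 : f ⟨1, by omega⟩ = 0 := by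
    refine mk ⟨0, by omega⟩ ⟨1, by omega⟩ ⟨2, by omega⟩ ?_ ?_ (by simp) ?_ <;>
      rw [cycle_adj_of_lt _ _ (by rw [Fin.lt_def]; norm_num)] <;> dsimp only <;> omega
  have h2 : f ⟨2, by omega⟩ = 0 := by
    refine mk ⟨1, by omega⟩ ⟨2, by omega⟩ ⟨3, by omega⟩ ?_ ?_ (by simp) ?_ <;>
      rw [cycle_adj_of_lt _ _ (by rw [Fin.lt_def]; norm_num)] <;> dsimp only <;> omega
  have := f.injective (h1.trans h2.symm)
  simp at this

lemma windmill_bridgeless (e : Sym2 (Fin 7)) : ¬ windmill.IsBridge e := by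
  induction e using Sym2.ind with
  | _ u v =>
    rw [isBridge_iff, not_not]
    by_cases h : u = v
    · subst h; exact Reachable.refl _
    have key : ∀ u v : Fin 7, u ≠ v → ∃ w, windmill.Adj u w ∧ windmill.Adj w v := by decide
    obtain ⟨w, h1, h2⟩ := key u v h
    have n1 := h1.ne
    have n2 := h2.ne
    have a1 : (windmill.deleteEdges {s(u, v)}).Adj u w := by
      rw [deleteEdges_adj]; refine ⟨h1, ?_⟩; simp; grind
    have a2 : (windmill.deleteEdges {s(u, v)}).Adj w v := by
      rw [deleteEdges_adj]; refine ⟨h2, ?_⟩; simp; grind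
    exact a1.reachable.trans a2.reachable

lemma windmill_rainbow : RainbowConnectedUnder windmill windmillCol := by
  have key : ∀ u v : Fin 7, u = v ∨ windmill.Adj u v ∨
      (∃ w, windmill.Adj u w ∧ windmill.Adj w v ∧ u ≠ v ∧
        windmillCol s(u, w) ≠ windmillCol s(w, v)) ∨
      (∃ w x, windmill.Adj u w ∧ windmill.Adj w x ∧ windmill.Adj x v ∧ u ≠ x ∧ u ≠ v ∧ w ≠ v ∧
        windmillCol s(u, w) ≠ windmillCol s(w, x) ∧ windmillCol s(u, w) ≠ windmillCol s(x, v) ∧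
        windmillCol s(w, x) ≠ windmillCol s(x, v)) := by
    decide +kernel
  intro u v
  obtain rfl | h | ⟨w, h1, h2, n, c⟩ | ⟨w, x, h1, h2, h3, n1, n2, n3, c1, c2, c3⟩ := key u v
  · exact ⟨Walk.nil, by simp⟩
  · exact ⟨Walk.cons h Walk.nil, by simp [h.ne]⟩
  · exact ⟨Walk.cons h1 (Walk.cons h2 Walk.nil), by simp [h1.ne, h2.ne, n, c]⟩
  · exact ⟨Walk.cons h1 (Walk.cons h2 (Walk.cons h3 Walk.nil)),
      by simp [h1.ne, h2.ne, h3.ne, n1, n2, n3, c1, c2, c3]⟩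

lemma windmill_lower (n : ℕ) (c : Sym2 (Fin 7) → ℕ) (hc : ∀ e ∈ windmill.edgeSet, c e < n)
    (hr : RainbowConnectedUnder windmill c) : 3 ≤ n := by
  by_contra! hn
  have key : ∀ u v : Fin 7, u ≠ v → ¬ windmill.Adj u v → c s(u, 0) ≠ c s(0, v) := by
    intro u v huv hadj
    obtain ⟨p, -, hp⟩ := hr u v
    have hlen : p.length ≤ 2 := by
      have hsub : (p.edges.map c).toFinset ⊆ Finset.range 2 := by
        intro x hx
        simp only [List.mem_toFinset, List.mem_map] at hx
        obtain ⟨e, he, rfl⟩ := hx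
        have := hc e (p.edges_subset_edgeSet he)
        simp; omega
      have := Finset.card_le_card hsub
      rw [List.toFinset_card_of_nodup hp] at this
      simpa using this
    have mid : ∀ u w v : Fin 7, windmill.Adj u w → windmill.Adj w v → u ≠ v →
      ¬ windmill.Adj u v → w = 0 := by decide
    match p, hp, hlen with
    | .nil, _, _ => exact absurd rfl huv
    | .cons h .nil, _, _ => exact absurd h hadj
    | .cons (v := w) h1 (.cons h2 .nil), hp, _ =>
      have := mid _ _ _ h1 h2 huv hadj
      subst this
      simpa using hp
    | .cons _ (.cons _ (.cons _ _)), _, hl => simp at hl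
  have a := key 1 3 (by decide) (by decide)
  have b := key 1 5 (by decide) (by decide)
  have d := key 3 5 (by decide) (by decide)
  rw [Sym2.eq_swap (a := 0)] at a b d
  have l1 := hc s(1, 0) (by rw [mem_edgeSet]; decide)
  have l2 := hc s(3, 0) (by rw [mem_edgeSet]; decide)
  have l3 := hc s(5, 0) (by rw [mem_edgeSet]; decide)
  omega

lemma windmill_rc : rc windmill = 3 := by
  have hmem : 3 ∈ {n | ∃ c : Sym2 (Fin 7) → ℕ, (∀ e ∈ windmill.edgeSet, c e < n) ∧
      RainbowConnectedUnder windmill c} := by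
    refine ⟨windmillCol, fun e _ => ?_, windmill_rainbow⟩
    induction e using Sym2.ind with
    | _ u v => revert u v; decide
  apply le_antisymm (Nat.sInf_le hmem)
  obtain ⟨c, hc, hr⟩ := Nat.sInf_mem (Set.nonempty_of_mem hmem)
  exact windmill_lower _ c hc hr

lemma windmill_radius : graphRadius windmill = 1 := by
  have hb : ∀ v, BddAbove (Set.range fun u => windmill.dist v u) :=
    fun v => (Set.finite_range _).bddAbove
  have h0 : ecc windmill 0 ≤ 1 := by
    refine csSup_le (Set.range_nonempty _) ?_
    rintro _ ⟨u, rfl⟩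
    by_cases h : u = 0
    · subst h; simp
    · have : windmill.Adj 0 u := by revert u; decide
      exact (dist_eq_one_iff_adj.2 this).le
  have h1 : ∀ v, 1 ≤ ecc windmill v := by
    intro v
    obtain ⟨u, hu⟩ : ∃ u, windmill.Adj v u := by revert v; decide
    exact (dist_eq_one_iff_adj.2 hu).symm.le.trans (le_csSup (hb v) ⟨u, rfl⟩)
  apply le_antisymm
  · exact (Nat.sInf_le (Set.mem_range_self (f := fun v => ecc windmill v) 0)).trans h0
  · refine le_csInf (Set.range_nonempty _) ?_
    rintro _ ⟨v, rfl⟩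
    exact h1 v

/-- There exists a finite connected bridge-less chordal graph `G` with
`rc(G) = 3 · rad(G)`. -/
theorem stmt_9 : ∃ (V : Type) (_ : Fintype V) (G : SimpleGraph V),
    G.Connected ∧ IsChordal G ∧ (∀ e : Sym2 V, ¬ G.IsBridge e) ∧
    rc G = 3 * graphRadius G := by
  exact ⟨Fin 7, inferInstance, windmill, windmill_connected, windmill_chordal,
    windmill_bridgeless, by rw [windmill_rc, windmill_radius]⟩
end

section
/- Let G be a finite connected simple unit interval graph with minimum degree δ(G) ≥ 2. Then rc(G) = diam(G). -/
open SimpleGraph Set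

/-- Lower bound: any rainbow colouring needs at least diameter many colours. -/
theorem graphDiam_le_of_rainbow {V : Type*} [Fintype V] (G : SimpleGraph V) (hG : G.Connected)
    (n : ℕ) (c : Sym2 V → ℕ) (hc : ∀ e ∈ G.edgeSet, c e < n) (hr : RainbowConnectedUnder G c) :
    graphDiam G ≤ n := by
  have := hG.nonempty
  apply csSup_le (Set.range_nonempty _)
  rintro _ ⟨⟨u, v⟩, rfl⟩
  obtain ⟨p, -, hp⟩ := hr u v
  have h1 : (p.edges.map c).toFinset ⊆ Finset.range n := by
    intro x hx
    simp only [List.mem_toFinset, List.mem_map] at hx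
    obtain ⟨e, he, rfl⟩ := hx
    exact Finset.mem_range.2 (hc e (p.edges_subset_edgeSet he))
  have h2 := Finset.card_le_card h1
  rw [List.toFinset_card_of_nodup hp] at h2
  simp only [List.length_map, SimpleGraph.Walk.length_edges, Finset.card_range] at h2
  exact (SimpleGraph.dist_le p).trans h2

/-- The colouring by the larger level of the two endpoints. -/
def levelColour {V : Type*} (f : V → ℕ) : Sym2 V → ℕ :=
  Sym2.lift ⟨fun u v => max (f u) (f v) - 1, fun u v => by simp only [max_comm]⟩

theorem exists_pred {V : Type*} (G : SimpleGraph V) (hG : G.Connected) (r v : V) (n : ℕ)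
    (h : G.dist r v = n + 1) : ∃ p, G.Adj p v ∧ G.dist r p = n := by
  obtain ⟨w, hw⟩ := hG.exists_walk_length_eq_dist r v
  have hnn : ¬ w.reverse.Nil := by
    intro hn
    have := SimpleGraph.Walk.length_eq_zero_iff.2 hn
    rw [SimpleGraph.Walk.length_reverse] at this
    omega
  have hadj := w.reverse.adj_snd hnn
  have hl := SimpleGraph.Walk.length_tail_add_one hnn
  have h1 := SimpleGraph.dist_le w.reverse.tail
  rw [SimpleGraph.dist_comm] at h1
  simp only [SimpleGraph.Walk.length_reverse] at hl
  refine ⟨_, hadj.symm, ?_⟩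
  have h2 := hG.dist_triangle (u := r) (v := w.reverse.snd) (w := v)
  have h3 := SimpleGraph.dist_eq_one_iff_adj.2 hadj.symm
  omega

theorem stmt_10 {V : Type*} [Fintype V] (G : SimpleGraph V) (hG : G.Connected)
    (hui : IsUnitIntervalGraph G) (hδ : ∀ v : V, 2 ≤ deg G v) :
    rc G = graphDiam G := by
  classical
  have := hG.nonempty
  obtain ⟨a, ha⟩ := hui
  have hadj : ∀ u v, u ≠ v → (G.Adj u v ↔ a u ≤ a v + 1 ∧ a v ≤ a u + 1) := by
    intro u v huv
    rw [ha u v huv]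
    constructor
    · rintro ⟨x, ⟨h1, h2⟩, h3, h4⟩
      constructor <;> linarith
    · rintro ⟨h1, h2⟩
      exact ⟨max (a u) (a v), ⟨le_max_left _ _, max_le (by linarith) h2⟩,
        ⟨le_max_right _ _, max_le h1 (by linarith)⟩⟩
  obtain ⟨r, hr⟩ := Finite.exists_min a
  have hmono : ∀ n, ∀ u v, G.dist r v = n → a u < a v → G.dist r u ≤ n := by
    intro n
    induction n with
    | zero =>
      intro u v hv huv
      have := (hG.dist_eq_zero_iff).1 hv
      subst this
      exact absurd (hr u) (not_le.2 huv)
    | succ n ih =>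
      intro u v hv huv
      obtain ⟨p, hpv, hp⟩ := exists_pred G hG r v n hv
      rcases lt_or_ge (a u) (a p) with h | h
      · exact (ih u p hp h).trans (Nat.le_succ n)
      · by_cases hup : p = u
        · subst hup; omega
        · have h1 := (hadj p v hpv.ne).1 hpv
          have h2 : G.Adj p u := (hadj p u hup).2 ⟨by linarith, by linarith [h1.2]⟩
          have h3 := SimpleGraph.dist_eq_one_iff_adj.2 h2
          have h4 := hG.dist_triangle (u := r) (v := p) (w := u)
          omega
  have hclique0 : ∀ u v, u ≠ v → G.dist r u = G.dist r v → a u ≤ a v →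
      G.Adj u v ∧ 1 ≤ G.dist r u := by
    intro u v huv he hle
    rcases hn : G.dist r v with _ | n
    · rw [hn] at he
      exact absurd (((hG.dist_eq_zero_iff).1 he).symm.trans ((hG.dist_eq_zero_iff).1 hn)) huv
    · obtain ⟨p, hpv, hp⟩ := exists_pred G hG r v n hn
      have h1 := (hadj p v hpv.ne).1 hpv
      have h2 : a p ≤ a u := by
        by_contra h
        have := hmono n u p hp (not_le.1 h)
        omega
      exact ⟨(hadj u v huv).2 ⟨by linarith, by linarith [h1.2]⟩, by omega⟩
  have hclique : ∀ u v, u ≠ v → G.dist r u = G.dist r v → G.Adj u v ∧ 1 ≤ G.dist r u := by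
    intro u v huv he
    rcases le_total (a u) (a v) with h | h
    · exact hclique0 u v huv he h
    · obtain ⟨h1, h2⟩ := hclique0 v u huv.symm he.symm h
      exact ⟨h1.symm, by omega⟩
  have hlast : ∀ n, (∃ v, G.dist r v = n + 1) →
      ∃ w, G.dist r w = n ∧ ∀ v, G.dist r v = n + 1 → G.Adj w v := by
    rintro n ⟨v0, hv0⟩
    obtain ⟨p0, -, hp0⟩ := exists_pred G hG r v0 n hv0
    obtain ⟨w, hw, hmax⟩ := Set.exists_max_image {x | G.dist r x = n} a (Set.toFinite _) ⟨p0, hp0⟩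
    have hw : G.dist r w = n := hw
    refine ⟨w, hw, fun v hv => ?_⟩
    obtain ⟨p, hpv, hp⟩ := exists_pred G hG r v n hv
    have h1 := (hadj p v hpv.ne).1 hpv
    have h2 : a p ≤ a w := hmax p hp
    have h3 : a w ≤ a v := by
      by_contra h
      have := hmono n v w hw (not_le.1 h)
      omega
    refine (hadj w v ?_).2 ⟨by linarith, by linarith [h1.2]⟩
    rintro rfl
    omega
  set c := levelColour (fun v => G.dist r v) with hcdef
  have hc : ∀ u v, c s(u, v) = max (G.dist r u) (G.dist r v) - 1 := fun u v => rfl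
  have hpath : ∀ u v k, G.dist r v = G.dist r u + k → ∃ p : G.Walk u v, p.IsPath ∧
      (p.edges.map c).Nodup ∧ (∀ x ∈ p.support, G.dist r x ≤ G.dist r v) ∧
      (∀ e ∈ p.edges, c e < G.dist r v) := by
    intro u v k
    induction k generalizing v with
    | zero =>
      intro h
      by_cases huv : u = v
      · subst huv
        exact ⟨SimpleGraph.Walk.nil, by simp, by simp, by simp, by simp⟩
      · obtain ⟨h1, h2⟩ := hclique u v huv (by omega)
        refine ⟨SimpleGraph.Walk.cons h1 SimpleGraph.Walk.nil, by simp [huv], by simp, ?_, ?_⟩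
        · simp; omega
        · simp [hc]; omega
    | succ k ih =>
      intro h
      obtain ⟨w, hw, hwv⟩ := hlast (G.dist r u + k) ⟨v, by omega⟩
      have hv := hwv v (by omega)
      obtain ⟨p, hp1, hp2, hp3, hp4⟩ := ih w hw
      have hcv : c s(w, v) = G.dist r w := by rw [hc]; omega
      refine ⟨p.concat hv, hp1.concat (fun hm => ?_) hv, ?_, ?_, ?_⟩
      · have := hp3 v hm; omega
      · rw [SimpleGraph.Walk.edges_concat, List.concat_eq_append, List.map_append,
          List.nodup_append']
        refine ⟨hp2, by simp, ?_⟩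
        intro x hx hx'
        simp only [List.map_cons, List.map_nil, List.mem_singleton] at hx'
        obtain ⟨e, he, rfl⟩ := List.mem_map.1 hx
        have := hp4 e he
        omega
      · intro x hx
        rw [SimpleGraph.Walk.support_concat, List.mem_append,
          List.mem_singleton] at hx
        rcases hx with hx | rfl
        · have := hp3 x hx; omega
        · exact le_rfl
      · intro e he
        rw [SimpleGraph.Walk.edges_concat, List.concat_eq_append, List.mem_append,
          List.mem_singleton] at he
        rcases he with he | rfl
        · have := hp4 e he; omega
        · omega
  have hrain : RainbowConnectedUnder G c := by
    intro u v
    rcases le_total (G.dist r u) (G.dist r v) with h | h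
    · obtain ⟨p, h1, h2, -⟩ := hpath u v _ (Nat.add_sub_cancel' h).symm
      exact ⟨p, h1, h2⟩
    · obtain ⟨p, h1, h2, -⟩ := hpath v u _ (Nat.add_sub_cancel' h).symm
      refine ⟨p.reverse, h1.reverse, ?_⟩
      rw [SimpleGraph.Walk.edges_reverse, List.map_reverse, List.nodup_reverse]
      exact h2
  have hdiam : ∀ v, G.dist r v ≤ graphDiam G := fun v =>
    le_csSup (Set.finite_range _).bddAbove ⟨(r, v), rfl⟩
  have hlt : ∀ e ∈ G.edgeSet, c e < graphDiam G := by
    intro e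
    induction e using Sym2.ind with
    | _ u v =>
      intro he
      have he : G.Adj u v := he
      have h1 := hdiam u
      have h2 := hdiam v
      have h3 : ¬ (G.dist r u = 0 ∧ G.dist r v = 0) := by
        rintro ⟨h, h'⟩
        exact he.ne (((hG.dist_eq_zero_iff).1 h).symm.trans ((hG.dist_eq_zero_iff).1 h'))
      rw [hc]
      omega
  apply le_antisymm
  · exact Nat.sInf_le ⟨c, hlt, hrain⟩
  · refine le_csInf ⟨_, c, hlt, hrain⟩ ?_
    rintro n ⟨c', h1, h2⟩
    exact graphDiam_le_of_rainbow G hG n c' h1 h2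
end

section
/- Let G be a finite connected simple graph and let D ⊆ V(G) be a connected two-way two-step dominating set of G (that is: every vertex of G is at graph distance at most 2 from D, the induced subgraph G[D] is connected, D contains every pendant vertex of G, and every vertex at distance exactly 2 from D has at least two neighbours at distance exactly 1 from D). Then rc(G) ≤ rc(G[D]) + 6. -/
open SimpleGraph Set

/-- Two-labelling extending a given labelling on `S`, such that every vertex off `S` that has a
neighbour has an oppositely labelled neighbour. -/
lemma exists_cut {V : Type*} [Finite V] (K : V → V → Prop) (hs : ∀ a b, K a b → K b a)
    (hirr : ∀ a, ¬ K a a) (S : Set V) (κ₀ : V → Bool) :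
    ∃ κ : V → Bool, (∀ a ∈ S, κ a = κ₀ a) ∧ ∀ a, a ∉ S → (∃ b, K a b) → ∃ b, K a b ∧ κ a ≠ κ b := by
  classical
  let T : Set (V → Bool) := {κ | ∀ a ∈ S, κ a = κ₀ a}
  let cut : (V → Bool) → Set (V × V) := fun κ => {e | K e.1 e.2 ∧ κ e.1 ≠ κ e.2}
  obtain ⟨κ, hκ, hmax⟩ := (Set.toFinite T).exists_maximalFor cut T ⟨κ₀, fun _ _ => rfl⟩
  refine ⟨κ, hκ, ?_⟩
  intro a ha ⟨b, hab⟩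
  by_contra! hcon
  let κ' : V → Bool := Function.update κ a (!κ a)
  have hκ' : κ' ∈ T := by
    intro x hx
    have hxa : x ≠ a := by rintro rfl; exact ha hx
    simp only [κ', Function.update_of_ne hxa]
    exact hκ x hx
  have hle : cut κ ≤ cut κ' := by
    rintro ⟨x, y⟩ ⟨h1, h2⟩
    have hxa : x ≠ a := by rintro rfl; exact h2 (hcon y h1)
    have hya : y ≠ a := by rintro rfl; exact h2 (hcon x (hs _ _ h1)).symm
    refine ⟨h1, ?_⟩
    simpa only [κ', Function.update_of_ne hxa, Function.update_of_ne hya] using h2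
  have h3 := hmax hκ' hle
  have hba : b ≠ a := by rintro rfl; exact hirr _ hab
  have h4 : (a, b) ∈ cut κ' := by
    refine ⟨hab, ?_⟩
    simp only [κ', Function.update_of_ne hba, Function.update_self]
    rw [hcon b hab]; simp
  exact (h3 h4).2 (hcon b hab)

/-- `u` reaches `D` by a walk whose colours are listed by `l`, shifted by `k`. -/
def Rch {V : Type*} (G : SimpleGraph V) (D : Set V) (c : Sym2 V → ℕ) (k : ℕ) (u : V)
    (l : List ℕ) : Prop :=
  ∃ d ∈ D, ∃ p : G.Walk u d, p.edges.map c = l.map (k + ·)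

lemma Rch.nil {V : Type*} {G : SimpleGraph V} {D : Set V} {c : Sym2 V → ℕ} {k : ℕ} {u : V}
    (h : u ∈ D) : Rch G D c k u [] := ⟨u, h, Walk.nil, by simp⟩

lemma Rch.cons {V : Type*} {G : SimpleGraph V} {D : Set V} {c : Sym2 V → ℕ} {k : ℕ} {u v : V}
    {i : ℕ} {l : List ℕ} (h : G.Adj u v) (hc : c s(u, v) = k + i) (hv : Rch G D c k v l) :
    Rch G D c k u (i :: l) := by
  obtain ⟨d, hd, p, hp⟩ := hv
  exact ⟨d, hd, Walk.cons h p, by simp [hp, hc]⟩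

/-- The possible families of colour lists of a vertex. -/
def fams : List (List (List ℕ)) :=
  [[[]],
   [[0],[1]], [[0],[2,1]], [[0],[3,4,1]],
   [[1],[0]], [[1],[2,0]], [[1],[4,3,0]],
   [[3,0],[4,1]],
   [[5,0],[2,0],[2,1]], [[5,0],[2,0],[2,3,4,1]], [[5,0],[3,0],[3,2,1]],
   [[5,1],[2,1],[2,0]], [[5,1],[2,1],[2,4,3,0]], [[5,1],[3,1],[3,2,0]]]

set_option maxRecDepth 100000 in
lemma fams_compat : ∀ F₁ ∈ fams, ∀ F₂ ∈ fams, ∃ l₁ ∈ F₁, ∃ l₂ ∈ F₂, (l₁ ++ l₂).Nodup := by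
  decide

lemma exists_rainbow_path {V : Type*} {G : SimpleGraph V} {c : Sym2 V → ℕ} {u v : V}
    (p : G.Walk u v) (hp : (p.edges.map c).Nodup) :
    ∃ p : G.Walk u v, p.IsPath ∧ (p.edges.map c).Nodup := by
  classical
  refine ⟨p.bypass, p.bypass_isPath, ?_⟩
  refine List.Nodup.map_on ?_ p.bypass_isPath.isTrail.edges_nodup
  intro x hx y hy hxy
  exact List.inj_on_of_nodup_map hp (p.edges_bypass_subset_edges hx) (p.edges_bypass_subset_edges hy) hxy

lemma rainbow_of_fams {V : Type*} {G : SimpleGraph V} {D : Set V} {c : Sym2 V → ℕ} {k : ℕ}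
    (hD : ∀ u ∈ D, ∀ v ∈ D, ∃ p : G.Walk u v, (p.edges.map c).Nodup ∧ ∀ x ∈ p.edges.map c, x < k)
    (hF : ∀ u, ∃ F ∈ fams, ∀ l ∈ F, Rch G D c k u l) : RainbowConnectedUnder G c := by
  intro u v
  obtain ⟨F₁, hF₁, h₁⟩ := hF u
  obtain ⟨F₂, hF₂, h₂⟩ := hF v
  obtain ⟨l₁, hl₁, l₂, hl₂, hn⟩ := fams_compat F₁ hF₁ F₂ hF₂
  obtain ⟨d₁, hd₁, p₁, hp₁⟩ := h₁ l₁ hl₁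
  obtain ⟨d₂, hd₂, p₂, hp₂⟩ := h₂ l₂ hl₂
  obtain ⟨q, hq, hqk⟩ := hD d₁ hd₁ d₂ hd₂
  apply exists_rainbow_path ((p₁.append q).append p₂.reverse)
  have hinj : Function.Injective (k + ·) := fun a b h => by simpa using h
  have hn' : (l₁.map (k + ·) ++ l₂.map (k + ·)).Nodup := by
    rw [← List.map_append]; exact hn.map hinj
  rw [List.nodup_append] at hn'
  obtain ⟨n1, n2, n3⟩ := hn'
  have e : (((p₁.append q).append p₂.reverse).edges.map c)
      = (l₁.map (k + ·) ++ q.edges.map c) ++ (l₂.map (k + ·)).reverse := by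
    simp only [Walk.edges_append, Walk.edges_reverse, List.map_append, List.map_reverse, hp₁, hp₂]
  rw [e, List.nodup_append, List.nodup_append]
  have big : ∀ l : List ℕ, ∀ x ∈ l.map (k + ·), k ≤ x := by
    intro l x hx
    obtain ⟨i, -, rfl⟩ := List.mem_map.1 hx
    simp
  refine ⟨⟨n1, hq, ?_⟩, List.nodup_reverse.2 n2, ?_⟩
  · intro a ha b hb hab
    have := big _ _ ha
    have := hqk _ hb
    omega
  · intro a ha b hb
    rw [List.mem_reverse] at hb
    rcases List.mem_append.1 ha with ha | ha
    · exact n3 a ha b hb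
    · intro hab
      have := big _ _ hb
      have := hqk _ ha
      omega

lemma rc_spec {V : Type*} [Finite V] (G : SimpleGraph V) (hG : G.Connected) :
    ∃ c : Sym2 V → ℕ, (∀ e ∈ G.edgeSet, c e < rc G) ∧ RainbowConnectedUnder G c := by
  classical
  have : Set.Nonempty {n | ∃ c : Sym2 V → ℕ,
      (∀ e ∈ G.edgeSet, c e < n) ∧ RainbowConnectedUnder G c} := by
    have : Finite (Sym2 V) := inferInstance
    obtain ⟨n, ⟨f⟩⟩ := Finite.exists_equiv_fin (Sym2 V)
    refine ⟨n, fun e => f e, fun e _ => (f e).2, ?_⟩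
    intro u v
    obtain ⟨p, hp⟩ := hG.exists_isPath u v
    refine ⟨p, hp, hp.isTrail.edges_nodup.map ?_⟩
    intro a b h
    exact f.injective (Fin.ext h)
  exact Nat.sInf_mem this

/-- Leg colour attached to a label. -/
def kk (b : Bool) : ℕ := if b then 0 else 1

lemma core {V : Type*} [Finite V] (G : SimpleGraph V) (D : Set V)
    (hconn : (G.induce D).Connected) (N : V → Prop)
    (hN : ∀ a, N a ↔ a ∉ D ∧ ∃ d ∈ D, G.Adj a d)
    (h1 : ∀ a, N a → (∃ d ∈ D, ∃ d' ∈ D, d ≠ d' ∧ G.Adj a d ∧ G.Adj a d') ∨ ∃ b, b ∉ D ∧ G.Adj a b)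
    (h2 : ∀ v, v ∉ D → ¬ N v → ∃ a b, a ≠ b ∧ N a ∧ N b ∧ G.Adj v a ∧ G.Adj v b) :
    rc G ≤ rc (G.induce D) + 6 := by
  classical
  obtain ⟨c₀, hc₀, hr₀⟩ := rc_spec (G.induce D) hconn
  generalize rc (G.induce D) = k at *
  let H : V → V → Prop := fun a b => N a ∧ N b ∧ G.Adj a b
  let S : Set V := {a | ∃ b, H a b}
  let K : V → V → Prop := fun a b => a ≠ b ∧ N a ∧ N b ∧
    ∃ v, v ∉ D ∧ ¬ N v ∧ G.Adj v a ∧ G.Adj v b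
  obtain ⟨κ₀, -, hκ₀⟩ := exists_cut H (fun a b h => ⟨h.2.1, h.1, h.2.2.symm⟩)
    (fun a h => G.irrefl h.2.2) ∅ (fun _ => true)
  obtain ⟨κ, hκ, hκK⟩ := exists_cut K
    (fun a b ⟨h, ha, hb, v, hv, hnv, hva, hvb⟩ => ⟨h.symm, hb, ha, v, hv, hnv, hvb, hva⟩)
    (fun a h => h.1 rfl) S κ₀
  have hκH : ∀ a ∈ S, ∃ b, H a b ∧ κ a ≠ κ b := by
    intro a ha
    obtain ⟨b, hab, hne⟩ := hκ₀ a (by simp) ha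
    refine ⟨b, hab, ?_⟩
    rwa [hκ a ha, hκ b ⟨a, hab.2.1, hab.1, hab.2.2.symm⟩]
  have hfoot : ∀ a, ∃ d, N a → d ∈ D ∧ G.Adj a d := by
    intro a
    by_cases ha : N a
    · obtain ⟨-, d, hd⟩ := (hN a).1 ha
      exact ⟨d, fun _ => hd⟩
    · exact ⟨a, fun h => absurd h ha⟩
  choose foot hfoot using hfoot
  have hf : ∀ v, ∃ a, v ∉ D → ¬ N v → N a ∧ G.Adj v a := by
    intro v
    by_cases hv : v ∉ D ∧ ¬ N v
    · obtain ⟨a, b, -, ha, -, hva, -⟩ := h2 v hv.1 hv.2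
      exact ⟨a, fun _ _ => ⟨ha, hva⟩⟩
    · exact ⟨v, fun h h' => absurd ⟨h, h'⟩ hv⟩
  choose f hf using hf
  let good : V → Prop := fun v => ∃ a b, N a ∧ N b ∧ G.Adj v a ∧ G.Adj v b ∧ κ a ≠ κ b
  let leg : V → V → ℕ := fun a d => if d = foot a ∨ a ∈ S then kk (κ a) else kk (!κ a)
  let n2 : V → V → ℕ := fun v a => if good v then (if κ a then 3 else 4) else
    if a = f v then (if a ∈ S then 3 else 2) else 5
  let g : V → V → ℕ := fun u v =>
    if h : u ∈ D ∧ v ∈ D then c₀ s(⟨u, h.1⟩, ⟨v, h.2⟩) else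
    if N u ∧ v ∈ D then k + leg u v else
    if N u ∧ N v then k + 2 else
    if u ∉ D ∧ ¬ N u ∧ N v then k + n2 u v else 0
  let c : Sym2 V → ℕ := Sym2.lift ⟨fun u v => max (g u v) (g v u), fun u v => max_comm _ _⟩
  have hND : ∀ a, N a → a ∉ D := fun a ha => ((hN a).1 ha).1
  have kkle : ∀ b, kk b ≤ 1 := by decide
  have legle : ∀ a d, leg a d ≤ 1 := by
    intro a d; simp only [leg]; split_ifs <;> apply kkle
  have n2le : ∀ a d, n2 a d ≤ 5 := by
    intro a d; simp only [n2]; split_ifs <;> omega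
  have gle : ∀ u v, G.Adj u v → g u v < k + 6 := by
    intro u v huv
    have := legle u v
    have := n2le u v
    simp only [g]
    split_ifs with h
    · have := hc₀ s(⟨u, h.1⟩, ⟨v, h.2⟩) (by simpa using huv)
      omega
    all_goals omega
  have cD : ∀ u v (hu : u ∈ D) (hv : v ∈ D), c s(u, v) = c₀ s(⟨u, hu⟩, ⟨v, hv⟩) := by
    intro u v hu hv
    have e1 : g u v = c₀ s(⟨u, hu⟩, ⟨v, hv⟩) := by simp only [g]; rw [dif_pos ⟨hu, hv⟩]
    have e2 : g v u = c₀ s(⟨u, hu⟩, ⟨v, hv⟩) := by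
      simp only [g]; rw [dif_pos ⟨hv, hu⟩, Sym2.eq_swap]
    show max (g u v) (g v u) = _
    rw [e1, e2, max_self]
  have cleg : ∀ u v, N u → v ∈ D → c s(u, v) = k + leg u v := by
    intro u v hu hv
    have hu' := hND u hu
    have hv' : ¬ N v := fun h => hND v h hv
    show max (g u v) (g v u) = _
    simp [g, hu, hv, hu', hv']
  have cH : ∀ u v, N u → N v → c s(u, v) = k + 2 := by
    intro u v hu hv
    have hu' := hND u hu
    have hv' := hND v hv
    show max (g u v) (g v u) = _
    simp [g, hu, hv, hu', hv']
  have cn2 : ∀ u v, u ∉ D → ¬ N u → N v → c s(u, v) = k + n2 u v := by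
    intro u v hu' hu hv
    have hv' := hND v hv
    show max (g u v) (g v u) = _
    simp [g, hu, hv, hu', hv']
  refine Nat.sInf_le ⟨c, ?_, ?_⟩
  · intro e
    induction e using Sym2.ind with
    | _ u v =>
      intro he
      have he : G.Adj u v := he
      exact max_lt (gle u v he) (gle v u he.symm)
  apply rainbow_of_fams (D := D) (k := k)
  · intro u hu v hv
    obtain ⟨p, -, hp⟩ := hr₀ ⟨u, hu⟩ ⟨v, hv⟩
    have key : ∀ (x y : D) (p : (G.induce D).Walk x y), ∃ q : G.Walk (x : V) (y : V),
        q.edges.map c = p.edges.map c₀ := by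
      intro x y p
      induction p with
      | nil => exact ⟨Walk.nil, by simp⟩
      | cons h p ih =>
        obtain ⟨q, hq⟩ := ih
        refine ⟨Walk.cons (by simpa using h) q, ?_⟩
        simp only [Walk.edges_cons, List.map_cons, hq]
        rw [cD _ _ (Subtype.property _) (Subtype.property _)]
    obtain ⟨q, hq⟩ := key _ _ p
    refine ⟨q, by rwa [hq], ?_⟩
    rw [hq]
    intro x hx
    obtain ⟨e, he, rfl⟩ := List.mem_map.1 hx
    exact hc₀ e (p.edges_subset_edgeSet he)
  -- the families
  have R1 : ∀ a, N a → Rch G D c k a [kk (κ a)] := by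
    intro a ha
    obtain ⟨hd, had⟩ := hfoot a ha
    refine Rch.cons had ?_ (Rch.nil hd)
    rw [cleg a _ ha hd]; simp [leg]
  have Rgood : ∀ v, v ∉ D → ¬ N v → good v → ∀ a, N a → G.Adj v a → ∀ l, Rch G D c k a l →
      Rch G D c k v ((if κ a then 3 else 4) :: l) := by
    intro v hv hnv hg a ha hva l hl
    refine Rch.cons hva ?_ hl
    rw [cn2 v a hv hnv ha]; simp [n2, hg]
  have RS : ∀ a ∈ S, Rch G D c k a [2, kk (!κ a)] := by
    intro a ha
    obtain ⟨b, hab, hne⟩ := hκH a ha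
    refine Rch.cons hab.2.2 (cH a b hab.1 hab.2.1) ?_
    have : κ b = !κ a := by revert hne; cases κ a <;> cases κ b <;> simp
    rw [← this]; exact R1 b hab.2.1
  have RnS : ∀ a, N a → a ∉ S → Rch G D c k a [kk (!κ a)] ∨
      Rch G D c k a (if κ a then [3, 4, 1] else [4, 3, 0]) := by
    intro a ha haS
    by_cases htwo : ∃ d ∈ D, d ≠ foot a ∧ G.Adj a d
    · left
      obtain ⟨d, hd, hne, had⟩ := htwo
      refine Rch.cons had ?_ (Rch.nil hd)
      rw [cleg a d ha hd]; simp [leg, hne, haS]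
    · right
      have hb : ∃ b, b ∉ D ∧ G.Adj a b := by
        rcases h1 a ha with ⟨d, hd, d', hd', hne, had, had'⟩ | h
        · exfalso
          apply htwo
          by_cases e : d = foot a
          · exact ⟨d', hd', fun e' => hne (e.trans e'.symm), had'⟩
          · exact ⟨d, hd, e, had⟩
        · exact h
      obtain ⟨v, hv, hav⟩ := hb
      have hnv : ¬ N v := fun h => haS ⟨v, ha, h, hav⟩
      have hKex : ∃ b, K a b := by
        obtain ⟨x, y, hxy, hx, hy, hvx, hvy⟩ := h2 v hv hnv
        by_cases e : a = x
        · exact ⟨y, e ▸ hxy, ha, hy, v, hv, hnv, hav.symm, hvy⟩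
        · exact ⟨x, e, ha, hx, v, hv, hnv, hav.symm, hvx⟩
      obtain ⟨b, ⟨-, -, hb, w, hw, hnw, hwa, hwb⟩, hne⟩ := hκK a haS hKex
      have hg : good w := ⟨a, b, ha, hb, hwa, hwb, hne⟩
      have r1 := Rgood w hw hnw hg b hb hwb _ (R1 b hb)
      have r2 : Rch G D c k a ((if κ a then 3 else 4) :: (if κ b then 3 else 4) :: [kk (κ b)]) := by
        refine Rch.cons hwa.symm ?_ r1
        rw [Sym2.eq_swap, cn2 w a hw hnw ha]; simp [n2, hg]
      revert r2 hne
      cases κ a <;> cases κ b <;> simp [kk]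
  intro u
  by_cases huD : u ∈ D
  · exact ⟨[[]], by decide, by simpa using Rch.nil huD⟩
  by_cases hu : N u
  · have r1 := R1 u hu
    by_cases huS : u ∈ S
    · have r2 := RS u huS
      cases hk : κ u <;> simp only [hk, kk] at r1 r2
      · exact ⟨[[1],[2,0]], by decide, by simpa using ⟨r1, r2⟩⟩
      · exact ⟨[[0],[2,1]], by decide, by simpa using ⟨r1, r2⟩⟩
    · rcases RnS u hu huS with r2 | r2 <;> cases hk : κ u <;> simp only [hk, kk] at r1 r2
      · exact ⟨[[1],[0]], by decide, by simpa using ⟨r1, r2⟩⟩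
      · exact ⟨[[0],[1]], by decide, by simpa using ⟨r1, r2⟩⟩
      · exact ⟨[[1],[4,3,0]], by decide, by simpa using ⟨r1, r2⟩⟩
      · exact ⟨[[0],[3,4,1]], by decide, by simpa using ⟨r1, r2⟩⟩
  by_cases hg : good u
  · have hab : ∀ b : Bool, ∃ a, N a ∧ G.Adj u a ∧ κ a = b := by
      obtain ⟨x, y, hx, hy, hux, huy, hne⟩ := hg
      intro b
      by_cases e : κ x = b
      · exact ⟨x, hx, hux, e⟩
      · refine ⟨y, hy, huy, ?_⟩
        revert hne e; cases κ x <;> cases κ y <;> cases b <;> simp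
    obtain ⟨a, ha, hua, hka⟩ := hab true
    obtain ⟨b, hb, hub, hkb⟩ := hab false
    have r1 := Rgood u huD hu hg a ha hua _ (R1 a ha)
    have r2 := Rgood u huD hu hg b hb hub _ (R1 b hb)
    simp only [hka, hkb, kk] at r1 r2
    exact ⟨[[3,0],[4,1]], by decide, by simpa using ⟨r1, r2⟩⟩
  · obtain ⟨hfN, hfa⟩ := hf u huD hu
    have hother : ∃ b, b ≠ f u ∧ N b ∧ G.Adj u b := by
      obtain ⟨x, y, hxy, hx, hy, hux, huy⟩ := h2 u huD hu
      by_cases e : x = f u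
      · exact ⟨y, fun e' => hxy (e.trans e'.symm), hy, huy⟩
      · exact ⟨x, e, hx, hux⟩
    obtain ⟨b, hbf, hb, hub⟩ := hother
    have hkb : κ b = κ (f u) := by
      by_contra hne
      exact hg ⟨b, f u, hb, hfN, hub, hfa, hne⟩
    have r0 : Rch G D c k u [5, kk (κ (f u))] := by
      refine Rch.cons hub ?_ (hkb ▸ R1 b hb)
      rw [cn2 u b huD hu hb]; simp [n2, hg, hbf]
    have rf : ∀ l, Rch G D c k (f u) l →
        Rch G D c k u ((if f u ∈ S then 3 else 2) :: l) := by
      intro l hl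
      refine Rch.cons hfa ?_ hl
      rw [cn2 u _ huD hu hfN]; simp [n2, hg]
    have r1 := rf _ (R1 _ hfN)
    by_cases hS : f u ∈ S
    · have r2 := rf _ (RS _ hS)
      cases hk : κ (f u) <;> simp only [hk, kk, hS] at r0 r1 r2
      · exact ⟨[[5,1],[3,1],[3,2,0]], by decide, by simpa using ⟨r0, r1, r2⟩⟩
      · exact ⟨[[5,0],[3,0],[3,2,1]], by decide, by simpa using ⟨r0, r1, r2⟩⟩
    · rcases RnS _ hfN hS with r2 | r2 <;> replace r2 := rf _ r2 <;>
        cases hk : κ (f u) <;> simp only [hk, kk, hS] at r0 r1 r2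
      · exact ⟨[[5,1],[2,1],[2,0]], by decide, by simpa using ⟨r0, r1, r2⟩⟩
      · exact ⟨[[5,0],[2,0],[2,1]], by decide, by simpa using ⟨r0, r1, r2⟩⟩
      · exact ⟨[[5,1],[2,1],[2,4,3,0]], by decide, by simpa using ⟨r0, r1, r2⟩⟩
      · exact ⟨[[5,0],[2,0],[2,3,4,1]], by decide, by simpa using ⟨r0, r1, r2⟩⟩

/-- If `D` is a connected two-way two-step dominating set in a finite
connected graph `G`, then `rc(G) ≤ rc(G[D]) + 6`. -/
theorem stmt_11 {V : Type*} [Fintype V] (G : SimpleGraph V) (hG : G.Connected)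
    (D : Set V)
    (hdom : ∀ v : V, ∃ u ∈ D, G.dist u v ≤ 2)
    (hconn : (G.induce D).Connected)
    (hpen : ∀ v : V, deg G v = 1 → v ∈ D)
    (htwo : ∀ v : V, distSet G D v = 2 →
      2 ≤ (G.neighborSet v ∩ {w : V | distSet G D w = 1}).ncard) :
    rc G ≤ rc (G.induce D) + 6 := by
  classical
  have dspec : ∀ v, ∃ u ∈ D, G.dist u v = distSet G D v := by
    intro v
    obtain ⟨u, hu, -⟩ := hdom v
    have := Nat.sInf_mem (s := (fun u => G.dist u v) '' D) ⟨_, u, hu, rfl⟩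
    obtain ⟨w, hw, h⟩ := this
    exact ⟨w, hw, h⟩
  have dle : ∀ v, ∀ u ∈ D, distSet G D v ≤ G.dist u v := by
    intro v u hu
    exact Nat.sInf_le ⟨u, hu, rfl⟩
  have d1 : ∀ v, distSet G D v = 1 → v ∉ D ∧ ∃ d ∈ D, G.Adj v d := by
    intro v hv
    constructor
    · intro h
      have := dle v v h
      simp [hv] at this
    · obtain ⟨u, hu, h⟩ := dspec v
      rw [hv, SimpleGraph.dist_eq_one_iff_adj] at h
      exact ⟨u, hu, h.symm⟩
  have d2 : ∀ v, v ∉ D → ¬ (v ∉ D ∧ ∃ d ∈ D, G.Adj v d) → distSet G D v = 2 := by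
    intro v hv hn
    obtain ⟨u, hu, h⟩ := dspec v
    obtain ⟨w, hw, hw2⟩ := hdom v
    have hle := dle v w hw
    have h0 : distSet G D v ≠ 0 := by
      intro h0
      rw [h0, hG.dist_eq_zero_iff] at h
      exact hv (h ▸ hu)
    have h1 : distSet G D v ≠ 1 := fun h1 => hn (d1 v h1)
    omega
  refine core G D hconn (fun a => a ∉ D ∧ ∃ d ∈ D, G.Adj a d) (fun a => Iff.rfl) ?_ ?_
  · rintro a ⟨haD, d, hd, had⟩
    by_contra! hcon
    obtain ⟨hc1, hc2⟩ := hcon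
    apply haD
    apply hpen
    unfold deg
    rw [Set.ncard_eq_one]
    refine ⟨d, ?_⟩
    ext x
    simp only [mem_neighborSet, mem_singleton_iff]
    constructor
    · intro hax
      by_contra hne
      by_cases hx : x ∈ D
      · exact hc1 x hx d hd hne hax had
      · exact hc2 x hx hax
    · rintro rfl; exact had
  · intro v hv hn
    have h := htwo v (d2 v hv hn)
    obtain ⟨a, ha, b, hb, hab⟩ := (Set.one_lt_ncard (Set.toFinite _)).1 h
    exact ⟨a, b, hab, d1 a ha.2, d1 b hb.2, ha.1, hb.1⟩
end

section
/- Every finite connected simple graph G of order n and minimum degree δ has a connected two-step dominating set D (every vertex is at distance at most 2 from D and G[D] is connected) whose size satisfies |D| ≤ 3(n − |N^2(D)|)/(δ + 1) − 2, where N^2(D) is the set of vertices at graph distance exactly 2 from D. -/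
open SimpleGraph Set

/-- Closed neighbourhood of a set. -/
def closedNbhd {V : Type*} (G : SimpleGraph V) (D : Set V) : Set V :=
  {v | ∃ u ∈ D, u = v ∨ G.Adj u v}

lemma closedNbhd_single {V : Type*} [Fintype V] (G : SimpleGraph V)
    (δ : ℕ) (hδ : ∀ v : V, δ ≤ deg G v) (v : V) : δ + 1 ≤ (closedNbhd G {v}).ncard := by
  have h : closedNbhd G {v} = insert v (G.neighborSet v) := by
    ext w
    simp [closedNbhd, eq_comm]
  rw [h, Set.ncard_insert_of_notMem (by simp) (Set.toFinite _)]
  have := hδ v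
  unfold deg at this
  omega

lemma dist_le_one_of {V : Type*} (G : SimpleGraph V) {u v : V} (h : u = v ∨ G.Adj u v) :
    G.dist u v ≤ 1 := by
  rcases h with rfl | h
  · simp
  · exact le_of_eq (SimpleGraph.dist_eq_one_iff_adj.2 h)

lemma exists_path_three {V : Type*} [Fintype V] (G : SimpleGraph V) (hG : G.Connected)
    (D : Set V) (hD : D.Nonempty) (hw : ∃ w, ∀ u ∈ D, 2 < G.dist u w) :
    ∃ u ∈ D, ∃ v, (∀ u' ∈ D, 2 < G.dist u' v) ∧ ∃ p : G.Walk u v, p.length = 3 := by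
  classical
  have hex : ∃ k, ∃ u ∈ D, ∃ v, (∀ u' ∈ D, 2 < G.dist u' v) ∧ G.dist u v = k := by
    obtain ⟨w, hw⟩ := hw
    obtain ⟨u, hu⟩ := hD
    exact ⟨_, u, hu, w, hw, rfl⟩
  obtain ⟨u, hu, v, hv, hk⟩ := Nat.find_spec hex
  have hmin : ∀ u' ∈ D, ∀ v', (∀ u'' ∈ D, 2 < G.dist u'' v') → G.dist u v ≤ G.dist u' v' := by
    intro u' hu' v' hv'
    rw [hk]
    exact Nat.find_min' hex ⟨u', hu', v', hv', rfl⟩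
  refine ⟨u, hu, v, hv, ?_⟩
  obtain ⟨p, hp⟩ := hG.exists_walk_length_eq_dist v u
  have h3 := hv u hu
  have hle : G.dist u v ≤ 3 := by
    cases p with
    | nil => simp at h3
    | @cons _ x _ h q =>
      rw [SimpleGraph.Walk.length_cons, SimpleGraph.dist_comm] at hp
      have hq := SimpleGraph.dist_le q
      by_cases hx : ∀ u' ∈ D, 2 < G.dist u' x
      · have := hmin u hu x hx
        rw [SimpleGraph.dist_comm (u := u) (v := x)] at this
        omega
      · push Not at hx
        obtain ⟨u', hu', hd⟩ := hx
        have h1 := hmin u' hu' v hv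
        have h2 := hG.dist_triangle (u := u') (v := x) (w := v)
        have h4 := dist_le_one_of G (Or.inr h.symm)
        omega
  refine ⟨p.reverse, ?_⟩
  rw [SimpleGraph.Walk.length_reverse, hp, SimpleGraph.dist_comm]
  omega

theorem stmt_12 {V : Type*} [Fintype V] (G : SimpleGraph V) (hG : G.Connected)
    (δ : ℕ) (hδ : ∀ v : V, δ ≤ deg G v) :
    ∃ D : Set V, (∀ v : V, ∃ u ∈ D, G.dist u v ≤ 2) ∧ (G.induce D).Connected ∧
      (D.ncard : ℝ) ≤
        3 * ((Fintype.card V : ℝ) - (({v : V | distSet G D v = 2}).ncard : ℝ)) / (δ + 1)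
          - 2 := by
  classical
  let S : Set (Set V) := {D | (G.induce D).Connected ∧
    (D.ncard + 2) * (δ + 1) ≤ 3 * (closedNbhd G D).ncard}
  have hS : S.Nonempty := by
    obtain ⟨v⟩ := hG.nonempty
    refine ⟨{v}, ?_, ?_⟩
    · exact (SimpleGraph.connected_iff _).2
        ⟨SimpleGraph.Preconnected.of_subsingleton, ⟨⟨v, rfl⟩⟩⟩
    · have := closedNbhd_single G δ hδ v
      rw [Set.ncard_singleton]
      omega
  obtain ⟨D, ⟨hc, hn⟩, hmax⟩ := Set.exists_max_image S Set.ncard (Set.toFinite _) hS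
  refine ⟨D, ?_, hc, ?_⟩
  · by_contra hcon
    push Not at hcon
    obtain ⟨⟨u0, hu0⟩⟩ := hc.nonempty
    obtain ⟨u, hu, v, hv, p, hp⟩ := exists_path_three G hG D ⟨u0, hu0⟩ hcon
    have hvD : v ∉ D := fun h => by simpa using hv v h
    let P : Set V := {x | x ∈ p.support}
    have hcard : (D ∪ P).ncard ≤ D.ncard + 3 := by
      have h1 : D ∪ P ⊆ D ∪ (p.support.tail.toFinset : Set V) := by
        rintro x (hx | hx)
        · exact Or.inl hx
        · rcases (SimpleGraph.Walk.mem_support_iff p).1 hx with rfl | hx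
          · exact Or.inl hu
          · exact Or.inr (by simpa using hx)
      have h2 := Set.ncard_le_ncard h1 (Set.toFinite _)
      have h3 := Set.ncard_union_le D (p.support.tail.toFinset : Set V)
      rw [Set.ncard_coe_finset] at h3
      have h4 := List.toFinset_card_le p.support.tail
      have h5 := p.length_support
      rw [List.length_tail] at h4
      omega
    have hlt : D.ncard < (D ∪ P).ncard := by
      apply Set.ncard_lt_ncard _ (Set.toFinite _)
      refine ⟨Set.subset_union_left, fun h => hvD (h (Or.inr ?_))⟩
      exact p.end_mem_support
    have hN : (closedNbhd G D).ncard + (δ + 1) ≤ (closedNbhd G (D ∪ P)).ncard := by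
      have hdisj : Disjoint (closedNbhd G D) (closedNbhd G {v}) := by
        rw [Set.disjoint_left]
        rintro x ⟨a, ha, hax⟩ ⟨b, rfl, hbx⟩
        have h1 := dist_le_one_of G hax
        have h2 := dist_le_one_of G hbx
        have h3 := hG.dist_triangle (u := a) (v := x) (w := b)
        rw [SimpleGraph.dist_comm (u := x)] at h3
        have := hv a ha
        omega
      have hsub : closedNbhd G D ∪ closedNbhd G {v} ⊆ closedNbhd G (D ∪ P) := by
        rintro x (⟨a, ha, hax⟩ | ⟨b, rfl, hbx⟩)
        · exact ⟨a, Or.inl ha, hax⟩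
        · exact ⟨b, Or.inr p.end_mem_support, hbx⟩
      have h1 := Set.ncard_le_ncard hsub (Set.toFinite _)
      rw [Set.ncard_union_eq hdisj (Set.toFinite _) (Set.toFinite _)] at h1
      have := closedNbhd_single G δ hδ v
      omega
    have hmem : D ∪ P ∈ S := by
      refine ⟨?_, ?_⟩
      · exact SimpleGraph.induce_union_connected hc.preconnected
          p.connected_induce_support.preconnected
          ⟨u, hu, p.start_mem_support⟩
      · nlinarith
    have := hmax _ hmem
    omega
  · have hdisj : Disjoint (closedNbhd G D) {v : V | distSet G D v = 2} := by
      rw [Set.disjoint_left]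
      rintro x ⟨a, ha, hax⟩ hx
      have h1 := dist_le_one_of G hax
      have h2 : distSet G D x ≤ G.dist a x := Nat.sInf_le ⟨a, ha, rfl⟩
      simp only [Set.mem_setOf_eq] at hx
      omega
    have h1 := Set.ncard_le_ncard (Set.subset_univ
      (closedNbhd G D ∪ {v : V | distSet G D v = 2})) (Set.toFinite _)
    rw [Set.ncard_union_eq hdisj (Set.toFinite _) (Set.toFinite _), Set.ncard_univ,
      Nat.card_eq_fintype_card] at h1
    have h1' : ((closedNbhd G D).ncard : ℝ) + ({v : V | distSet G D v = 2}.ncard : ℝ)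
      ≤ Fintype.card V := by exact_mod_cast h1
    have hn' : ((D.ncard : ℝ) + 2) * (δ + 1) ≤ 3 * (closedNbhd G D).ncard := by
      exact_mod_cast hn
    rw [le_sub_iff_add_le, le_div_iff₀ (by positivity)]
    linarith
end

section
/- For every finite connected simple graph G of order n and minimum degree δ, the radius satisfies rad(G) ≤ 3n/(2(δ + 1)) + 1. -/
open SimpleGraph Set

universe u

theorem tree_center (n : ℕ) : ∀ (W : Type u) [Fintype W] (T : SimpleGraph W), T.IsTree →
    Fintype.card W = n → ∃ c : W, ∀ w, ∃ p : T.Walk c w, p.length ≤ n / 2 := by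
  classical
  induction n using Nat.strong_induction_on with
  | _ n ih =>
  intro W _ T hT hn
  have hne : Nonempty W := hT.connected.nonempty
  by_cases h1 : n ≤ 1
  · obtain ⟨c⟩ := hne
    have hs : Subsingleton W := Fintype.card_le_one_iff_subsingleton.mp (hn ▸ h1)
    refine ⟨c, fun w => ?_⟩
    obtain rfl := Subsingleton.elim c w
    exact ⟨Walk.nil, by simp⟩
  have hnt : Nontrivial W := Fintype.one_lt_card_iff_nontrivial.mp (by omega)
  obtain ⟨x, y, hxy, hx, hy⟩ := hT.exists_ne_and_degree_eq_one
  by_cases h2 : n = 2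
  · have huniv : ({x, y} : Finset W) = Finset.univ := by
      apply Finset.eq_univ_of_card
      rw [Finset.card_pair hxy, hn, h2]
    have hcov : ∀ w, w = x ∨ w = y := by
      intro w
      have := Finset.mem_univ w
      rw [← huniv] at this
      simpa using this
    obtain ⟨z, hz⟩ := hT.connected.preconnected.exists_adj_of_nontrivial x
    have hz' : z = y := by
      rcases hcov z with h | h
      · exact absurd h hz.ne'
      · exact h
    subst hz'
    refine ⟨x, fun w => ?_⟩
    rcases hcov w with h | h
    · subst h; exact ⟨Walk.nil, by simp⟩
    · subst h; exact ⟨hz.toWalk, by simp [h2]⟩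
  -- remove two leaves
  have hcard : Fintype.card ({x, y}ᶜ : Set W) = n - 2 := by
    rw [← hn, ← Nat.card_eq_fintype_card, Nat.card_coe_set_eq, Set.ncard_compl,
      Set.ncard_pair hxy, Nat.card_eq_fintype_card]
  have hleaf : ∀ v, T.degree v = 1 → (T.neighborSet v).Subsingleton := by
    intro v hv a ha b hb
    obtain ⟨u, _, hu⟩ := degree_eq_one_iff_existsUnique_adj.mp hv
    rw [hu a ha, hu b hb]
  have hpre : (T.induce ({x, y}ᶜ : Set W)).Preconnected := by
    apply hT.connected.preconnected.induce_of_degree_eq_one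
    intro v hv
    have : v = x ∨ v = y := by
      by_contra hcon
      exact hv (by simpa using hcon)
    rcases this with rfl | rfl
    · exact hleaf _ hx
    · exact hleaf _ hy
  have hne' : Nonempty ({x, y}ᶜ : Set W) := Fintype.card_pos_iff.mp (by omega)
  have htree : (T.induce ({x, y}ᶜ : Set W)).IsTree := ⟨⟨hpre⟩, hT.isAcyclic.induce _⟩
  obtain ⟨c, hc⟩ := ih (n - 2) (by omega) _ _ htree hcard
  have key : ∀ a b : W, a ≠ b → T.degree b = 1 → ∃ z, T.Adj a z ∧ z ≠ b := by
    intro a b hab hb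
    have hcon := hT.connected.induce_compl_singleton_of_degree_eq_one hb
    have : Nontrivial ({b}ᶜ : Set W) := by
      apply Fintype.one_lt_card_iff_nontrivial.mp
      rw [← Nat.card_eq_fintype_card, Nat.card_coe_set_eq, Set.ncard_compl,
        Set.ncard_singleton, Nat.card_eq_fintype_card]
      omega
    obtain ⟨z, hz⟩ := hcon.preconnected.exists_adj_of_nontrivial ⟨a, by simpa using hab⟩
    exact ⟨z.1, by simpa using hz, z.2⟩
  have hmap : ∀ w, w ≠ x → w ≠ y → ∃ p : T.Walk c.1 w, p.length ≤ (n - 2) / 2 := by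
    intro w hwx hwy
    obtain ⟨p, hp⟩ := hc ⟨w, by simp [hwx, hwy]⟩
    exact ⟨p.map (SimpleGraph.Embedding.induce _).toHom, (Walk.length_map _ p).trans_le hp⟩
  have hend : ∀ a z, T.Adj a z → z ≠ x → z ≠ y → ∃ p : T.Walk c.1 a, p.length ≤ n / 2 := by
    intro a z haz hzx hzy
    obtain ⟨p, hp⟩ := hmap z hzx hzy
    exact ⟨p.concat haz.symm, by rw [Walk.length_concat]; omega⟩
  refine ⟨c.1, fun w => ?_⟩
  by_cases hwx : w = x
  · subst hwx
    obtain ⟨z, hz, hzy⟩ := key w y hxy hy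
    exact hend w z hz hz.ne' hzy
  by_cases hwy : w = y
  · subst hwy
    obtain ⟨z, hz, hzx⟩ := key w x hxy.symm hx
    exact hend w z hz hzx hz.ne'
  obtain ⟨p, hp⟩ := hmap w hwx hwy
  exact ⟨p, by omega⟩

theorem set_center {V : Type u} [Fintype V] (G : SimpleGraph V) (D : Finset V)
    (hD : (G.induce (D : Set V)).Connected) :
    ∃ c : V, ∀ w ∈ D, G.dist c w ≤ D.card / 2 := by
  classical
  obtain ⟨T, hTle, hT⟩ := hD.exists_isTree_le
  obtain ⟨c, hc⟩ := tree_center D.card _ T hT (by simp)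
  refine ⟨c.1, fun w hw => ?_⟩
  obtain ⟨p, hp⟩ := hc ⟨w, hw⟩
  have := G.dist_le ((p.mapLe hTle).map (SimpleGraph.Embedding.induce _).toHom)
  rw [Walk.length_map, Walk.length_map] at this
  exact this.trans hp

/-- State of the greedy construction. -/
def GreedyState {V : Type u} (G : SimpleGraph V) (C D : Finset V) : Prop :=
  C ⊆ D ∧ 1 ≤ C.card ∧ D.card + 2 ≤ 3 * C.card ∧ (G.induce (D : Set V)).Connected ∧
    ∀ a ∈ C, ∀ b ∈ C, a ≠ b → 3 ≤ G.dist a b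

theorem greedy_step {V : Type u} [Fintype V] (G : SimpleGraph V) (hG : G.Connected)
    (C D : Finset V) (h : GreedyState G C D) (v : V) (hv : ∀ d ∈ D, 3 ≤ G.dist d v) :
    ∃ C' D', GreedyState G C' D' ∧ C'.card = C.card + 1 := by
  classical
  obtain ⟨hCD, hC1, hcard, hcon, hsep⟩ := h
  have hDne : D.Nonempty := by
    obtain ⟨c, hc⟩ := Finset.card_pos.mp hC1
    exact ⟨c, hCD hc⟩
  obtain ⟨d, hd, hmin⟩ := D.exists_min_image (fun d => G.dist d v) hDne
  obtain ⟨p, hp⟩ := hG.exists_walk_length_eq_dist d v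
  have hL := hv d hd
  set w := p.getVert 3 with hw
  have hwv : G.dist w v ≤ p.length - 3 := by
    have := G.dist_le (p.drop 3)
    simpa using this
  have hfar : ∀ e ∈ D, 3 ≤ G.dist e w := by
    intro e he
    have h1 := hmin e he
    have h2 := hG.dist_triangle (u := e) (v := w) (w := v)
    omega
  have hwD : w ∉ D := fun hwD => by
    have := hfar w hwD
    simp at this
  have a0 : G.Adj d (p.getVert 1) := by
    have := p.adj_getVert_succ (i := 0) (by omega)
    simpa using this
  have a1 : G.Adj (p.getVert 1) (p.getVert 2) := p.adj_getVert_succ (i := 1) (by omega)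
  have a2 : G.Adj (p.getVert 2) w := p.adj_getVert_succ (i := 2) (by omega)
  have ext : ∀ (s : Finset V) (a b : V), (G.induce (s : Set V)).Connected → a ∈ s → G.Adj a b →
      (G.induce ((insert b s : Finset V) : Set V)).Connected := by
    intro s a b hs ha hab
    have := connected_induce_union (s := (s : Set V)) (t := {b}) hs.preconnected
      (by
        have : Subsingleton ({b} : Set V) := by infer_instance
        exact Preconnected.of_subsingleton) ha (mem_singleton b) hab
    have e : ((insert b s : Finset V) : Set V) = (s : Set V) ∪ {b} := by
      rw [Finset.coe_insert, Set.union_singleton]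
    rwa [e]
  refine ⟨insert w C, insert w (insert (p.getVert 2) (insert (p.getVert 1) D)),
    ⟨?_, ?_, ?_, ?_, ?_⟩, ?_⟩
  · apply Finset.insert_subset_insert
    exact hCD.trans ((Finset.subset_insert _ _).trans (Finset.subset_insert _ _))
  · exact Finset.card_pos.mpr (Finset.insert_nonempty _ _)
  · rw [Finset.card_insert_of_notMem (fun h => hwD (hCD h))]
    have h1 := Finset.card_insert_le w (insert (p.getVert 2) (insert (p.getVert 1) D))
    have h2 := Finset.card_insert_le (p.getVert 2) (insert (p.getVert 1) D)
    have h3 := Finset.card_insert_le (p.getVert 1) D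
    omega
  · apply ext _ (p.getVert 2) _ _ (by simp) a2
    apply ext _ (p.getVert 1) _ _ (by simp) a1
    exact ext _ d _ hcon (by simpa using hd) a0
  · intro a ha b hb hab
    rw [Finset.mem_insert] at ha hb
    rcases ha with rfl | ha <;> rcases hb with rfl | hb
    · exact absurd rfl hab
    · rw [G.dist_comm]; exact hfar b (hCD hb)
    · exact hfar a (hCD ha)
    · exact hsep a ha b hb hab
  · exact Finset.card_insert_of_notMem (fun h => hwD (hCD h))

theorem greedy_exists {V : Type u} [Fintype V] (G : SimpleGraph V) (hG : G.Connected) :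
    ∃ C D, GreedyState G C D ∧ ∀ v, ∃ d ∈ D, G.dist d v ≤ 2 := by
  classical
  obtain ⟨v0⟩ := hG.nonempty
  have h0 : GreedyState G {v0} {v0} := by
    refine ⟨subset_rfl, by simp, by simp, ?_, ?_⟩
    · have : Subsingleton ((({v0} : Finset V) : Set V)) := by
        rw [Finset.coe_singleton]; infer_instance
      have : Nonempty ((({v0} : Finset V) : Set V)) := ⟨⟨v0, by simp⟩⟩
      exact ⟨Preconnected.of_subsingleton⟩
    · intro a ha b hb hab
      simp only [Finset.mem_singleton] at ha hb
      exact absurd (ha.trans hb.symm) hab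
  let S : Finset (Finset V × Finset V) := Finset.univ.filter fun q => GreedyState G q.1 q.2
  obtain ⟨⟨C, D⟩, hCD, hmax⟩ := S.exists_max_image (fun q => q.1.card)
    ⟨({v0}, {v0}), by simp [S, h0]⟩
  have hst : GreedyState G C D := by simpa [S] using hCD
  refine ⟨C, D, hst, ?_⟩
  by_contra hcon
  push Not at hcon
  obtain ⟨v, hv⟩ := hcon
  obtain ⟨C', D', h', hc'⟩ := greedy_step G hG C D hst v (fun d hd => hv d hd)
  have := hmax (C', D') (by simp [S, h'])
  simp only at this
  omega

theorem packing {V : Type u} [Fintype V] (G : SimpleGraph V) (hG : G.Connected) (δ : ℕ)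
    (hδ : ∀ v : V, δ ≤ deg G v) (C : Finset V)
    (hsep : ∀ a ∈ C, ∀ b ∈ C, a ≠ b → 3 ≤ G.dist a b) :
    C.card * (δ + 1) ≤ Fintype.card V := by
  classical
  have hball : ∀ v ∈ C, δ + 1 ≤ (insert v (G.neighborFinset v)).card := by
    intro v _
    rw [Finset.card_insert_of_notMem (by simp)]
    have := hδ v
    rw [deg, Set.ncard_eq_toFinset_card'] at this
    simpa [neighborFinset] using this
  have hd : ∀ a b, b ∈ insert a (G.neighborFinset a) → G.dist a b ≤ 1 := by
    intro a b hb
    rw [Finset.mem_insert, mem_neighborFinset] at hb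
    rcases hb with rfl | hb
    · simp
    · exact (dist_eq_one_iff_adj.mpr hb).le
  have hdisj : (C : Set V).PairwiseDisjoint fun v => insert v (G.neighborFinset v) := by
    intro a ha b hb hab
    rw [Function.onFun, Finset.disjoint_left]
    intro z hza hzb
    have h1 := hd a z hza
    have h2 := hd b z hzb
    rw [G.dist_comm] at h2
    have h3 := hsep a ha b hb hab
    have h4 := hG.dist_triangle (u := a) (v := z) (w := b)
    omega
  calc C.card * (δ + 1) = ∑ v ∈ C, (δ + 1) := by simp
    _ ≤ ∑ v ∈ C, (insert v (G.neighborFinset v)).card := Finset.sum_le_sum hball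
    _ = (C.biUnion fun v => insert v (G.neighborFinset v)).card :=
        (Finset.card_biUnion hdisj).symm
    _ ≤ Fintype.card V := Finset.card_le_univ _

/-- For every finite connected graph of order `n` and minimum degree
`δ`, `rad(G) ≤ 3n/(2(δ + 1)) + 1`. -/
theorem stmt_14 {V : Type*} [Fintype V] (G : SimpleGraph V) (hG : G.Connected)
    (δ : ℕ) (hδ : ∀ v : V, δ ≤ deg G v) :
    (graphRadius G : ℝ) ≤ 3 * (Fintype.card V : ℝ) / (2 * (δ + 1)) + 1 := by
  obtain ⟨C, D, ⟨_, _, hcard, hcon, hsep⟩, hdom⟩ := greedy_exists G hG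
  obtain ⟨c, hc⟩ := set_center G D hcon
  have hpack := packing G hG δ hδ C hsep
  have hrad : graphRadius G ≤ D.card / 2 + 2 := by
    refine (Nat.sInf_le (Set.mem_range_self c)).trans ?_
    have : Nonempty V := ⟨c⟩
    refine csSup_le (Set.range_nonempty _) ?_
    rintro _ ⟨v, rfl⟩
    obtain ⟨d, hd, hdv⟩ := hdom v
    have h1 := hc d hd
    have h2 := hG.dist_triangle (u := c) (v := d) (w := v)
    simp only
    omega
  have h2r : 2 * graphRadius G ≤ 3 * C.card + 2 := by omega
  have h2r' : (2 : ℝ) * graphRadius G ≤ 3 * C.card + 2 := by exact_mod_cast h2r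
  have hpack' : (C.card : ℝ) * (δ + 1) ≤ Fintype.card V := by exact_mod_cast hpack
  have hpos : (0 : ℝ) < 2 * ((δ : ℝ) + 1) := by positivity
  have hdiv : 3 * (C.card : ℝ) / 2 ≤ 3 * (Fintype.card V : ℝ) / (2 * (δ + 1)) := by
    rw [le_div_iff₀ hpos]
    nlinarith
  linarith
end

section
/- For every finite connected simple graph G of order n and minimum degree δ, the rainbow connection number satisfies rc(G) ≤ 3n/(δ + 1) + 3. -/
open SimpleGraph Set

namespace RCProof

lemma exists_split {V : Type*} (K : SimpleGraph V) :
    ∃ f : V → ℕ, (∀ v, f v = 0 ∨ f v = 1) ∧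
      ∀ v, (∃ w, K.Adj v w) → ∃ w, K.Adj v w ∧ f w ≠ f v := by
  classical
  let r : V → V := fun v => (K.connectedComponentMk v).out
  have hr : ∀ v, K.Reachable v (r v) := fun v => by
    have : K.connectedComponentMk (r v) = K.connectedComponentMk v := Quot.out_eq _
    exact (SimpleGraph.ConnectedComponent.exact this).symm
  have hrr : ∀ v w, K.Adj v w → r w = r v := fun v w h => by
    have : K.connectedComponentMk w = K.connectedComponentMk v :=
      SimpleGraph.ConnectedComponent.sound h.symm.reachable
    simp only [r, this]
  refine ⟨fun v => K.dist v (r v) % 2, fun v => by dsimp only; omega, ?_⟩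
  rintro v ⟨w, hw⟩
  obtain ⟨p, hp⟩ := (hr v).exists_walk_length_eq_dist
  by_cases h0 : v = r v
  · refine ⟨w, hw, ?_⟩
    have h1 : K.dist v (r v) = 0 := by rw [← h0]; simp
    have h2 : K.dist w (r w) = 1 := by
      rw [hrr v w hw, ← h0]; exact SimpleGraph.dist_eq_one_iff_adj.mpr hw.symm
    dsimp only
    rw [h1, h2]; decide
  · generalize hx : r v = x at p hp h0
    cases p with
    | nil => exact absurd rfl h0
    | @cons _ u _ h p =>
      refine ⟨u, h, ?_⟩
      have h1 : K.dist u x ≤ p.length := SimpleGraph.dist_le p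
      have hru : K.Reachable u x := p.reachable
      obtain ⟨q, hq⟩ := hru.exists_walk_length_eq_dist
      have h2 : K.dist v x ≤ (SimpleGraph.Walk.cons h q).length := SimpleGraph.dist_le _
      rw [SimpleGraph.Walk.length_cons] at hp h2
      dsimp only
      rw [hrr v u h, hx]
      omega

lemma exists_lift {V : Type*} (lev : V → ℕ) (g : V → V → ℕ) (h : Sym2 V → ℕ) :
    ∃ c : Sym2 V → ℕ, (∀ u v, lev u < lev v → c s(u, v) = g u v) ∧
      (∀ u v, lev u < lev v → c s(v, u) = g u v) ∧
      (∀ u v, lev u = lev v → c s(u, v) = h s(u, v)) := by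
  have main : ∃ c : Sym2 V → ℕ, (∀ u v, lev u < lev v → c s(u, v) = g u v) ∧
      (∀ u v, lev u = lev v → c s(u, v) = h s(u, v)) := by
    refine ⟨Sym2.lift ⟨fun u v => if lev u < lev v then g u v else if lev v < lev u then g v u
      else h s(u, v), ?_⟩, ?_, ?_⟩
    · intro u v
      dsimp only
      rw [Sym2.eq_swap]
      split_ifs <;> first | rfl | omega
    · intro u v huv
      simp [huv]
    · intro u v huv
      simp [huv]
  obtain ⟨c, h1, h2⟩ := main
  exact ⟨c, h1, fun u v huv => by rw [Sym2.eq_swap]; exact h1 u v huv, h2⟩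

/-- every pair of `D` is joined by a rainbow walk inside `D` with colours below `k` -/
def Good {V : Type*} (G : SimpleGraph V) (D : Set V) (k : ℕ) (c : Sym2 V → ℕ) : Prop :=
  ∀ u ∈ D, ∀ v ∈ D, ∃ p : G.Walk u v, (∀ x ∈ p.support, x ∈ D) ∧ (p.edges.map c).Nodup ∧
    ∀ e ∈ p.edges, c e < k

lemma good_insert {V : Type*} {G : SimpleGraph V} {D : Set V} {k : ℕ} {x d : V}
    (h : ∃ c, Good G D k c) (hx : x ∉ D) (hd : d ∈ D) (hxd : G.Adj x d) :
    ∃ c, Good G (insert x D) (k + 1) c := by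
  classical
  obtain ⟨c, hc⟩ := h
  refine ⟨Function.update c s(x, d) k, ?_⟩
  have key : ∀ {u v : V} (p : G.Walk u v), (∀ y ∈ p.support, y ∈ D) →
      p.edges.map (Function.update c s(x, d) k) = p.edges.map c := by
    intro u v p hp
    apply List.map_congr_left
    intro e he
    rw [Function.update_of_ne]
    rintro rfl
    exact hx (hp x (p.fst_mem_support_of_mem_edges he))
  have key2 : ∀ u ∈ D, ∀ v ∈ D, ∃ p : G.Walk u v, (∀ y ∈ p.support, y ∈ D) ∧
      (p.edges.map (Function.update c s(x, d) k)).Nodup ∧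
      ∀ e ∈ p.edges.map (Function.update c s(x, d) k), e < k := by
    intro u hu v hv
    obtain ⟨p, h1, h2, h3⟩ := hc u hu v hv
    refine ⟨p, h1, ?_, ?_⟩
    · rw [key p h1]; exact h2
    · rw [key p h1]; simpa using h3
  have key3 : ∀ v ∈ D, ∃ p : G.Walk x v, (∀ y ∈ p.support, y ∈ insert x D) ∧
      (p.edges.map (Function.update c s(x, d) k)).Nodup ∧
      ∀ e ∈ p.edges.map (Function.update c s(x, d) k), e < k + 1 := by
    intro v hv
    obtain ⟨p, h1, h2, h3⟩ := key2 d hd v hv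
    refine ⟨SimpleGraph.Walk.cons hxd p, ?_, ?_, ?_⟩
    · intro y hy
      rw [SimpleGraph.Walk.support_cons, List.mem_cons] at hy
      rcases hy with rfl | hy
      · exact Set.mem_insert _ _
      · exact Set.mem_insert_of_mem _ (h1 y hy)
    · rw [SimpleGraph.Walk.edges_cons, List.map_cons, List.nodup_cons]
      refine ⟨fun hm => ?_, h2⟩
      have := h3 _ hm
      simp at this
    · intro e he
      rw [SimpleGraph.Walk.edges_cons, List.map_cons, List.mem_cons] at he
      rcases he with rfl | he
      · simp
      · exact (h3 e he).trans (Nat.lt_succ_self _)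
  intro u hu v hv
  rcases hu with rfl | hu
  · rcases hv with rfl | hv
    · exact ⟨SimpleGraph.Walk.nil, by simp, by simp, by simp⟩
    · obtain ⟨p, h1, h2, h3⟩ := key3 v hv
      exact ⟨p, h1, h2, fun e he => h3 _ (List.mem_map_of_mem he)⟩
  · rcases hv with rfl | hv
    · obtain ⟨p, h1, h2, h3⟩ := key3 u hu
      refine ⟨p.reverse, ?_, ?_, ?_⟩
      · simpa using h1
      · rw [SimpleGraph.Walk.edges_reverse, List.map_reverse, List.nodup_reverse]; exact h2
      · intro e he
        rw [SimpleGraph.Walk.edges_reverse, List.mem_reverse] at he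
        exact h3 _ (List.mem_map_of_mem he)
    · obtain ⟨p, h1, h2, h3⟩ := key2 u hu v hv
      exact ⟨p, fun y hy => Set.mem_insert_of_mem _ (h1 y hy), h2,
        fun e he => (h3 _ (List.mem_map_of_mem he)).trans (Nat.lt_succ_self _)⟩

/-- an exit from `v` to `D` along a rainbow walk with colours `k + i`, `i ∈ S` -/
def Ex {V : Type*} (G : SimpleGraph V) (D : Set V) (k : ℕ) (c : Sym2 V → ℕ) (v : V)
    (S : Finset ℕ) : Prop :=
  ∃ d ∈ D, ∃ p : G.Walk v d, (p.edges.map c).Nodup ∧ ∀ e ∈ p.edges, ∃ i ∈ S, c e = k + i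

section
variable {V : Type*} {G : SimpleGraph V} {D : Set V} {k : ℕ} {c : Sym2 V → ℕ}

lemma ex_nil {d : V} (hd : d ∈ D) : Ex G D k c d ∅ :=
  ⟨d, hd, SimpleGraph.Walk.nil, by simp, by simp⟩

lemma ex_mono {v : V} {S T : Finset ℕ} (h : Ex G D k c v S) (hST : S ⊆ T) : Ex G D k c v T := by
  obtain ⟨d, hd, p, h1, h2⟩ := h
  refine ⟨d, hd, p, h1, fun e he => ?_⟩
  obtain ⟨i, hi, hc⟩ := h2 e he
  exact ⟨i, hST hi, hc⟩

lemma ex_cons {v w : V} {S : Finset ℕ} {i : ℕ} (h : Ex G D k c w S) (hvw : G.Adj v w)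
    (hc : c s(v, w) = k + i) (hi : i ∉ S) : Ex G D k c v (insert i S) := by
  obtain ⟨d, hd, p, h1, h2⟩ := h
  refine ⟨d, hd, SimpleGraph.Walk.cons hvw p, ?_, ?_⟩
  · rw [SimpleGraph.Walk.edges_cons, List.map_cons, List.nodup_cons]
    refine ⟨fun hm => ?_, h1⟩
    obtain ⟨e, he, hec⟩ := List.mem_map.mp hm
    obtain ⟨j, hj, hcj⟩ := h2 e he
    have : i = j := by omega
    exact hi (this ▸ hj)
  · intro e he
    rw [SimpleGraph.Walk.edges_cons, List.mem_cons] at he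
    rcases he with rfl | he
    · exact ⟨i, Finset.mem_insert_self _ _, hc⟩
    · obtain ⟨j, hj, hcj⟩ := h2 e he
      exact ⟨j, Finset.mem_insert_of_mem hj, hcj⟩

lemma ex_link (hD : Good G D k c) {v w : V} {S T : Finset ℕ} (hv : Ex G D k c v S)
    (hw : Ex G D k c w T) (hST : Disjoint S T) :
    ∃ p : G.Walk v w, (p.edges.map c).Nodup := by
  obtain ⟨d, hd, p, h1, h2⟩ := hv
  obtain ⟨d', hd', q, h3, h4⟩ := hw
  obtain ⟨r, -, h5, h6⟩ := hD d hd d' hd'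
  refine ⟨p.append (r.append q.reverse), ?_⟩
  rw [SimpleGraph.Walk.edges_append, SimpleGraph.Walk.edges_append, List.map_append,
    List.map_append, SimpleGraph.Walk.edges_reverse, List.map_reverse]
  rw [List.nodup_append, List.nodup_append, List.nodup_reverse]
  refine ⟨h1, ⟨h5, h3, ?_⟩, ?_⟩
  · intro a ha b hb hab
    obtain ⟨e, he, rfl⟩ := List.mem_map.mp ha
    obtain ⟨e', he', rfl⟩ := List.mem_map.mp (List.mem_reverse.mp hb)
    obtain ⟨i, _, hi⟩ := h4 e' he'
    have := h6 e he
    omega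
  · intro a ha b hb hab
    obtain ⟨e, he, rfl⟩ := List.mem_map.mp ha
    obtain ⟨i, hiS, hi⟩ := h2 e he
    rcases List.mem_append.mp hb with hb | hb
    · obtain ⟨e', he', rfl⟩ := List.mem_map.mp hb
      have := h6 e' he'
      omega
    · obtain ⟨e', he', rfl⟩ := List.mem_map.mp (List.mem_reverse.mp hb)
      obtain ⟨j, hjT, hj⟩ := h4 e' he'
      have : i = j := by omega
      subst this
      exact (Finset.disjoint_left.mp hST hiS) hjT

lemma path_of_walk {v w : V} (h : ∃ p : G.Walk v w, (p.edges.map c).Nodup) :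
    ∃ p : G.Walk v w, p.IsPath ∧ (p.edges.map c).Nodup := by
  classical
  obtain ⟨p, hp⟩ := h
  refine ⟨p.bypass, p.bypass_isPath, ?_⟩
  refine List.Nodup.map_on ?_ (p.bypass_isPath.isTrail.edges_nodup)
  intro x hx y hy hxy
  exact List.inj_on_of_nodup_map hp (p.edges_bypass_subset_edges hx)
    (p.edges_bypass_subset_edges hy) hxy

end
/-- the lists of exits available at the vertices of the various kinds -/
def kinds : List (List (Finset ℕ)) :=
  [[∅], [{0}, {1, 2, 3, 4}], [{1}, {0, 2, 3, 4}], [{0, 3}, {1, 4}],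
    [{0, 5}, {0, 2, 3, 4}, {1, 2, 3, 4}], [{1, 5}, {1, 2, 3, 4}, {0, 2, 3, 4}]]

lemma kinds_pair : ∀ K ∈ kinds, ∀ K' ∈ kinds, ∃ S ∈ K, ∃ T ∈ K', Disjoint S T := by
  decide

lemma extend {V : Type*} (G : SimpleGraph V) (D : Set V) (k : ℕ) (c₀ : Sym2 V → ℕ)
    (hD : Good G D k c₀) (hdeg : ∀ v x, ∃ y, y ≠ x ∧ G.Adj v y)
    (hdom : ∀ v, v ∈ D ∨ (∃ d ∈ D, G.Adj v d) ∨ ∃ a₁ a₂, a₁ ≠ a₂ ∧ G.Adj v a₁ ∧ G.Adj v a₂ ∧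
      (∃ d ∈ D, G.Adj a₁ d) ∧ (∃ d ∈ D, G.Adj a₂ d)) :
    ∃ c : Sym2 V → ℕ, (∀ e, c e < k + 6) ∧ RainbowConnectedUnder G c := by
  classical
  let lev : V → ℕ := fun v => if v ∈ D then 0 else if ∃ d ∈ D, G.Adj v d then 1 else 2
  have lev0 : ∀ v, lev v = 0 ↔ v ∈ D := fun v => by
    simp only [lev]; split_ifs <;> simp_all
  have lev1 : ∀ v, lev v = 1 ↔ v ∉ D ∧ ∃ d ∈ D, G.Adj v d := fun v => by
    simp only [lev]; split_ifs <;> simp_all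
  have lev2 : ∀ v, lev v = 2 ↔ v ∉ D ∧ ¬ ∃ d ∈ D, G.Adj v d := fun v => by
    simp only [lev]; split_ifs <;> simp_all
  have lev3 : ∀ v, lev v = 0 ∨ lev v = 1 ∨ lev v = 2 := fun v => by
    simp only [lev]; split_ifs <;> simp
  -- two neighbours in level one for the vertices of level two
  have two : ∀ b, lev b = 2 → ∃ a₁ a₂, a₁ ≠ a₂ ∧ G.Adj b a₁ ∧ G.Adj b a₂ ∧
      lev a₁ = 1 ∧ lev a₂ = 1 := by
    intro b hb
    obtain ⟨hb1, hb2⟩ := (lev2 b).mp hb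
    rcases hdom b with h | h | ⟨a₁, a₂, hne, h1, h2, h3, h4⟩
    · exact absurd h hb1
    · exact absurd h hb2
    · exact ⟨a₁, a₂, hne, h1, h2, (lev1 _).mpr ⟨fun h => hb2 ⟨_, h, h1⟩, h3⟩,
        (lev1 _).mpr ⟨fun h => hb2 ⟨_, h, h2⟩, h4⟩⟩
  let K : SimpleGraph V :=
    { Adj := fun a a' => a ≠ a' ∧ lev a = 1 ∧ lev a' = 1 ∧
        (G.Adj a a' ∨ ∃ b, lev b = 2 ∧ G.Adj a b ∧ G.Adj a' b)
      symm := ⟨fun a a' ⟨h1, h2, h3, h4⟩ => ⟨h1.symm, h3, h2, by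
        rcases h4 with h4 | ⟨b, h5, h6, h7⟩
        · exact Or.inl h4.symm
        · exact Or.inr ⟨b, h5, h7, h6⟩⟩⟩
      loopless := ⟨fun a h => h.1 rfl⟩ }
  obtain ⟨f, hf01, hf⟩ := exists_split K
  have hp' : ∀ a, ∃ d, lev a = 1 → d ∈ D ∧ G.Adj a d := by
    intro a
    by_cases h : lev a = 1
    · obtain ⟨_, d, hd, had⟩ := (lev1 a).mp h
      exact ⟨d, fun _ => ⟨hd, had⟩⟩
    · exact ⟨a, fun h' => absurd h' h⟩
  choose p hp using hp'
  have hq' : ∀ b, ∃ a a', lev b = 2 → a' ≠ a ∧ G.Adj b a ∧ G.Adj b a' ∧ lev a = 1 ∧ lev a' = 1 := by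
    intro b
    by_cases h : lev b = 2
    · obtain ⟨a₁, a₂, h1, h2, h3, h4, h5⟩ := two b h
      exact ⟨a₁, a₂, fun _ => ⟨h1.symm, h2, h3, h4, h5⟩⟩
    · exact ⟨b, b, fun h' => absurd h' h⟩
  choose q q' hq using hq'
  let P : V → Prop := fun a => (∃ d ∈ D, G.Adj a d ∧ d ≠ p a) ∨
    ∃ a', lev a' = 1 ∧ G.Adj a a' ∧ f a' ≠ f a
  let M : V → Prop := fun b => ∃ a a', lev a = 1 ∧ lev a' = 1 ∧ G.Adj b a ∧ G.Adj b a' ∧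
    f a = 0 ∧ f a' = 1
  let g : V → V → ℕ := fun u v =>
    if lev u = 0 then (if u = p v then k + f v else k + (1 - f v))
    else if M v then k + (3 + f u) else if u = q v then k + 5 else if P u then k + 3 else k + 2
  let h : Sym2 V → ℕ := fun e => if ∀ v ∈ e, v ∈ D then min (c₀ e) (k + 5) else k + 2
  obtain ⟨c, hc1, hc2, hc3⟩ := exists_lift lev g h
  have gb : ∀ u v, g u v < k + 6 := by
    intro u v
    have h1 := hf01 u
    have h2 := hf01 v
    simp only [g]
    split_ifs <;> omega
  refine ⟨c, ?_, ?_⟩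
  · intro e
    induction e using Sym2.ind with
    | _ u v =>
      rcases lt_trichotomy (lev u) (lev v) with hl | hl | hl
      · rw [hc1 u v hl]; exact gb u v
      · rw [hc3 u v hl]
        simp only [h]
        split_ifs <;> omega
      · rw [hc2 v u hl]; exact gb v u
  have hDc : Good G D k c := by
    intro u hu v hv
    obtain ⟨w, h1, h2, h3⟩ := hD u hu v hv
    have key : ∀ e ∈ w.edges, c e = c₀ e := by
      intro e he
      have hlt := h3 e he
      induction e using Sym2.ind with
      | _ x y =>
        have hx := h1 x (w.fst_mem_support_of_mem_edges he)
        have hy := h1 y (w.snd_mem_support_of_mem_edges he)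
        rw [hc3 x y (by rw [(lev0 x).mpr hx, (lev0 y).mpr hy])]
        have : ∀ v ∈ s(x, y), v ∈ D := by
          intro v hv
          rcases Sym2.mem_iff.mp hv with rfl | rfl <;> assumption
        simp only [h, if_pos this]
        omega
    refine ⟨w, h1, ?_, ?_⟩
    · rw [List.map_congr_left key]; exact h2
    · intro e he
      rw [key e he]; exact h3 e he
  -- colours
  have cDA : ∀ a d, lev a = 1 → d ∈ D → c s(a, d) = k + (if d = p a then f a else 1 - f a) := by
    intro a d ha hd
    have hd0 := (lev0 d).mpr hd
    rw [hc2 d a (by omega)]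
    simp only [g, hd0, if_true]
    split_ifs <;> rfl
  have cAA : ∀ a a', lev a = 1 → lev a' = 1 → c s(a, a') = k + 2 := by
    intro a a' ha ha'
    rw [hc3 a a' (by omega)]
    have : ¬ ∀ v ∈ s(a, a'), v ∈ D := fun hh =>
      ((lev1 a).mp ha).1 (hh a (Sym2.mem_mk_left _ _))
    simp only [h, if_neg this]
  have cAB : ∀ a b, lev a = 1 → lev b = 2 → c s(b, a) = k +
      (if M b then (3 + f a) else if a = q b then 5 else if P a then 3 else 2) := by
    intro a b ha hb
    rw [hc2 a b (by omega)]
    have h0 : ¬ lev a = 0 := by omega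
    simp only [g, if_neg h0]
    split_ifs <;> rfl
  -- exits of level one
  have e1 : ∀ a, lev a = 1 → Ex G D k c a {f a} := by
    intro a ha
    obtain ⟨h1, h2⟩ := hp a ha
    have := ex_cons (k := k) (c := c) (i := f a) (ex_nil h1) h2 (by rw [cDA a _ ha h1]; simp) (by simp)
    simpa using this
  have e2 : ∀ a, lev a = 1 → P a → Ex G D k c a {1 - f a, 2} := by
    intro a ha hPa
    have hfa := hf01 a
    rcases hPa with ⟨d, hd, had, hne⟩ | ⟨a', ha', haa', hne⟩
    · have := ex_cons (k := k) (c := c) (i := 1 - f a) (ex_nil hd) had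
        (by rw [cDA a _ ha hd, if_neg hne]) (by simp)
      exact ex_mono this (by simp)
    · have hfa' := hf01 a'
      have := ex_cons (i := 2) (e1 a' ha') haa' (cAA a a' ha ha') (by simp; omega)
      refine ex_mono this ?_
      have : f a' = 1 - f a := by omega
      rw [this, Finset.pair_comm]
  have e3 : ∀ a, lev a = 1 → ¬ P a → Ex G D k c a {1 - f a, 3, 4} := by
    intro a ha hPa
    have hfa := hf01 a
    have hK : ∃ w, K.Adj a w := by
      obtain ⟨y, hy, hay⟩ := hdeg a (p a)
      rcases lev3 y with hl | hl | hl
      · exact absurd (Or.inl ⟨y, (lev0 y).mp hl, hay, hy⟩) hPa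
      · exact ⟨y, hay.ne, ha, hl, Or.inl hay⟩
      · obtain ⟨a₁, a₂, hne, h1, h2, h3, h4⟩ := two y hl
        by_cases h5 : a = a₁
        · exact ⟨a₂, by rw [h5]; exact hne, ha, h4, Or.inr ⟨y, hl, hay, h2.symm⟩⟩
        · exact ⟨a₁, h5, ha, h3, Or.inr ⟨y, hl, hay, h1.symm⟩⟩
    obtain ⟨a', ⟨_, _, ha', hor⟩, hfne⟩ := hf a hK
    have hfa' := hf01 a'
    rcases hor with hor | ⟨b, hb, hab, hab'⟩
    · exact absurd (Or.inr ⟨a', ha', hor, hfne⟩) hPa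
    · have hM : M b := by
        rcases hfa with h0 | h0
        · exact ⟨a, a', ha, ha', hab.symm, hab'.symm, h0, by omega⟩
        · exact ⟨a', a, ha', ha, hab'.symm, hab.symm, by omega, h0⟩
      have s1 := ex_cons (i := 3 + f a') (e1 a' ha') hab'.symm
        (by rw [cAB a' b ha' hb, if_pos hM]) (by simp)
      have s2 := ex_cons (i := 3 + f a) s1 hab
        (by rw [Sym2.eq_swap, cAB a b ha hb, if_pos hM]) (by simp; omega)
      refine ex_mono s2 ?_
      rcases hfa with h0 | h0
      · have h0' : f a' = 1 := by omega
        rw [h0, h0']; decide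
      · have h0' : f a' = 0 := by omega
        rw [h0, h0']; decide
  have main : ∀ v, ∃ L ∈ kinds, ∀ S ∈ L, Ex G D k c v S := by
    intro v
    rcases lev3 v with hv | hv | hv
    · refine ⟨[∅], by decide, ?_⟩
      simpa using ex_nil ((lev0 v).mp hv)
    · have x1 := e1 v hv
      have x2 : Ex G D k c v {1 - f v, 2, 3, 4} := by
        by_cases hPv : P v
        · exact ex_mono (e2 v hv hPv) (by intro x; simp; tauto)
        · exact ex_mono (e3 v hv hPv) (by intro x; simp; tauto)
      rcases hf01 v with h0 | h0
      · rw [h0] at x1 x2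
        refine ⟨[{0}, {1, 2, 3, 4}], by decide, ?_⟩
        simpa using ⟨x1, x2⟩
      · rw [h0] at x1 x2
        refine ⟨[{1}, {0, 2, 3, 4}], by decide, ?_⟩
        simpa using ⟨x1, x2⟩
    · by_cases hM : M v
      · refine ⟨[{0, 3}, {1, 4}], by decide, ?_⟩
        obtain ⟨a, a', ha, ha', hva, hva', h0, h1⟩ := id hM
        have s1 := ex_cons (i := 3 + f a) (e1 a ha) hva
          (by rw [cAB a v ha hv, if_pos hM]) (by simp)
        have s2 := ex_cons (i := 3 + f a') (e1 a' ha') hva'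
          (by rw [cAB a' v ha' hv, if_pos hM]) (by simp)
        rw [h0] at s1
        rw [h1] at s2
        have s1' : Ex G D k c v {0, 3} := ex_mono s1 (by decide)
        have s2' : Ex G D k c v {1, 4} := ex_mono s2 (by decide)
        simpa using ⟨s1', s2'⟩
      · obtain ⟨hne, hvq, hvq', hl, hl'⟩ := hq v hv
        have hft := hf01 (q v)
        have hft' := hf01 (q' v)
        have hff : f (q' v) = f (q v) := by
          by_contra hcon
          rcases hft with h0 | h0
          · exact hM ⟨q v, q' v, hl, hl', hvq, hvq', h0, by omega⟩
          · exact hM ⟨q' v, q v, hl', hl, hvq', hvq, by omega, h0⟩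
        have s1 := ex_cons (i := 5) (e1 _ hl) hvq
          (by rw [cAB _ v hl hv, if_neg hM, if_pos rfl]) (by simp; omega)
        have s23 : Ex G D k c v {f (q v), 2, 3, 4} ∧ Ex G D k c v {1 - f (q v), 2, 3, 4} := by
          by_cases hP : P (q' v)
          · have s2 := ex_cons (i := 3) (e1 _ hl') hvq'
              (by rw [cAB _ v hl' hv, if_neg hM, if_neg hne, if_pos hP]) (by simp; omega)
            have s3 := ex_cons (i := 3) (e2 _ hl' hP) hvq'
              (by rw [cAB _ v hl' hv, if_neg hM, if_neg hne, if_pos hP]) (by simp; omega)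
            rw [hff] at s2 s3
            exact ⟨ex_mono s2 (by intro x; simp; tauto), ex_mono s3 (by intro x; simp; tauto)⟩
          · have s2 := ex_cons (i := 2) (e1 _ hl') hvq'
              (by rw [cAB _ v hl' hv, if_neg hM, if_neg hne, if_neg hP]) (by simp; omega)
            have s3 := ex_cons (i := 2) (e3 _ hl' hP) hvq'
              (by rw [cAB _ v hl' hv, if_neg hM, if_neg hne, if_neg hP]) (by simp; omega)
            rw [hff] at s2 s3
            exact ⟨ex_mono s2 (by intro x; simp; tauto), ex_mono s3 (by intro x; simp; tauto)⟩
        obtain ⟨s2, s3⟩ := s23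
        rcases hft with h0 | h0
        · rw [h0] at s1 s2 s3
          refine ⟨[{0, 5}, {0, 2, 3, 4}, {1, 2, 3, 4}], by decide, ?_⟩
          have s1' : Ex G D k c v {0, 5} := ex_mono s1 (by decide)
          simpa using ⟨s1', s2, s3⟩
        · rw [h0] at s1 s2 s3
          refine ⟨[{1, 5}, {1, 2, 3, 4}, {0, 2, 3, 4}], by decide, ?_⟩
          have s1' : Ex G D k c v {1, 5} := ex_mono s1 (by decide)
          simpa using ⟨s1', s2, s3⟩
  intro u v
  apply path_of_walk
  obtain ⟨L, hL, hu⟩ := main u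
  obtain ⟨L', hL', hv⟩ := main v
  obtain ⟨S, hS, T, hT, hST⟩ := kinds_pair L hL L' hL'
  exact ex_link hDc (hu S hS) (hv T hT) hST

lemma boundary {V : Type*} {G : SimpleGraph V} (hG : G.Connected) {S : Set V} (hS : S.Nonempty)
    {v : V} (hv : v ∉ S) : ∃ x y, x ∈ S ∧ y ∉ S ∧ G.Adj x y := by
  obtain ⟨u, hu⟩ := hS
  obtain ⟨p⟩ := hG.preconnected u v
  obtain ⟨d, _, h1, h2⟩ := p.exists_boundary_dart S hu hv
  exact ⟨_, _, h1, h2, d.adj⟩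

/-- closed neighbourhood of a set -/
def cl {V : Type*} (G : SimpleGraph V) (D : Set V) : Set V := {v | v ∈ D ∨ ∃ d ∈ D, G.Adj v d}

/-- connected sets, measured by their size -/
def Con {V : Type*} (G : SimpleGraph V) (D : Set V) : Prop :=
  ∃ k, D.ncard = k + 1 ∧ ∃ c, Good G D k c

lemma con_singleton {V : Type*} (G : SimpleGraph V) (v : V) : Con G {v} := by
  refine ⟨0, by simp, fun _ => 0, ?_⟩
  rintro _ rfl _ rfl
  exact ⟨SimpleGraph.Walk.nil, by simp, by simp, by simp⟩

lemma con_insert {V : Type*} [Finite V] {G : SimpleGraph V} {D : Set V} (h : Con G D) {x d : V}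
    (hx : x ∉ D) (hd : d ∈ D) (hxd : G.Adj x d) : Con G (insert x D) := by
  obtain ⟨k, hk, hc⟩ := h
  exact ⟨k + 1, by rw [Set.ncard_insert_of_notMem hx, hk], good_insert hc hx hd hxd⟩

lemma cl_mono {V : Type*} {G : SimpleGraph V} {D D' : Set V} (h : D ⊆ D') : cl G D ⊆ cl G D' := by
  rintro v (hv | ⟨d, hd, hvd⟩)
  · exact Or.inl (h hv)
  · exact Or.inr ⟨d, h hd, hvd⟩

lemma con_univ {V : Type*} [Finite V] {G : SimpleGraph V} (hG : G.Connected) :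
    Con G Set.univ := by
  obtain ⟨v⟩ := hG.nonempty
  obtain ⟨D, hD, hmax⟩ := (Set.toFinite {D : Set V | Con G D ∧ D.Nonempty}).exists_maximal
    ⟨{v}, con_singleton G v, by simp⟩
  have : D = Set.univ := by
    by_contra hne
    obtain ⟨w, hw⟩ := (Set.ne_univ_iff_exists_notMem D).mp hne
    obtain ⟨x, y, hx, hy, hxy⟩ := boundary hG hD.2 hw
    exact hy (hmax (y := insert y D) ⟨con_insert hD.1 hy hx hxy.symm, by simp⟩ (Set.subset_insert _ _) (Set.mem_insert _ _))
  rw [← this]; exact hD.1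

lemma exists_dom {V : Type*} [Finite V] {G : SimpleGraph V} (hG : G.Connected) (δ : ℕ)
    (hδ : ∀ v, δ ≤ (G.neighborSet v).ncard) (h2 : 2 ≤ δ) :
    ∃ D : Set V, Con G D ∧ (δ + 1) * (D.ncard + 2) ≤ 3 * Nat.card V ∧
      (∀ v, v ∈ D ∨ (∃ d ∈ D, G.Adj v d) ∨ ∃ a₁ a₂, a₁ ≠ a₂ ∧ G.Adj v a₁ ∧ G.Adj v a₂ ∧
      (∃ d ∈ D, G.Adj a₁ d) ∧ (∃ d ∈ D, G.Adj a₂ d)) := by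
  have nb : ∀ v, δ + 1 ≤ (insert v (G.neighborSet v)).ncard := by
    intro v
    rw [Set.ncard_insert_of_notMem (by simp)]
    exact Nat.succ_le_succ (hδ v)
  obtain ⟨v₀⟩ := hG.nonempty
  obtain ⟨D, ⟨hD, hne, hinv⟩, hmax⟩ := (Set.toFinite {D : Set V | Con G D ∧ D.Nonempty ∧
      (δ + 1) * (D.ncard + 2) ≤ 3 * (cl G D).ncard}).exists_maximal
    ⟨{v₀}, con_singleton G v₀, by simp, by
      have h1 : insert v₀ (G.neighborSet v₀) ⊆ cl G {v₀} := by
        rintro x (rfl | hx)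
        · exact Or.inl rfl
        · exact Or.inr ⟨v₀, rfl, hx.symm⟩
      have h2 := Set.ncard_le_ncard h1
      have h3 := nb v₀
      rw [Set.ncard_singleton]
      omega⟩
  -- a vertex outside the closed neighbourhood gives an enlargement bound
  have hcl : ∀ x, (∃ y ∈ cl G D, G.Adj x y) ∨ x ∈ cl G D := by
    by_contra hcon
    push Not at hcon
    obtain ⟨z, hz1, hz2⟩ := hcon
    have hz : z ∉ {x | (∃ y ∈ cl G D, G.Adj x y) ∨ x ∈ cl G D} := by
      rintro (⟨y, hy, hzy⟩ | h)
      · exact hz1 y hy hzy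
      · exact hz2 h
    obtain ⟨d₀, hd₀⟩ := hne
    obtain ⟨w, v, hw, hv, hwv⟩ := boundary hG (S := {x | (∃ y ∈ cl G D, G.Adj x y) ∨ x ∈ cl G D})
      ⟨d₀, Or.inr (Or.inl hd₀)⟩ hz
    have hv1 : ∀ y ∈ cl G D, ¬ G.Adj v y := fun y hy h => hv (Or.inl ⟨y, hy, h⟩)
    have hv2 : v ∉ cl G D := fun h => hv (Or.inr h)
    have hw2 : w ∉ cl G D := fun h => hv1 w h hwv.symm
    obtain ⟨x, hx, hwx⟩ := hw.resolve_right hw2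
    have hxD : x ∉ D := fun h => hw2 (Or.inr ⟨x, h, hwx⟩)
    obtain ⟨d, hd, hxd⟩ := hx.resolve_left hxD
    have hwD : w ∉ insert x D := by
      rintro (h | h)
      · exact hwx.ne h
      · exact hw2 (Or.inl h)
    have hvD : v ∉ insert w (insert x D) := by
      rintro (h | h | h)
      · exact hwv.ne h.symm
      · exact hv2 (h ▸ hx)
      · exact hv2 (Or.inl h)
    have hcon := con_insert (con_insert (con_insert hD hxD hd hxd) hwD (Set.mem_insert _ _) hwx)
      hvD (Set.mem_insert _ _) hwv.symm
    have hsub : D ⊆ insert v (insert w (insert x D)) := fun y hy => by simp [hy]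
    have hcard : (insert v (insert w (insert x D))).ncard = D.ncard + 3 := by
      rw [Set.ncard_insert_of_notMem hvD, Set.ncard_insert_of_notMem hwD,
        Set.ncard_insert_of_notMem hxD]
    have hdisj : Disjoint (cl G D) (insert v (G.neighborSet v)) := by
      rw [Set.disjoint_right]
      rintro y (rfl | hy)
      · exact hv2
      · exact fun h => hv1 y h hy
    have hU : cl G D ∪ insert v (G.neighborSet v) ⊆ cl G (insert v (insert w (insert x D))) := by
      apply Set.union_subset (cl_mono hsub)
      rintro y (rfl | hy)
      · exact Or.inl (Set.mem_insert _ _)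
      · exact Or.inr ⟨v, Set.mem_insert _ _, hy.symm⟩
    have h5 := Set.ncard_le_ncard hU
    rw [Set.ncard_union_eq hdisj] at h5
    have h6 := nb v
    refine hvD (Set.mem_insert_of_mem _ ?_)
    have := hmax (y := insert v (insert w (insert x D))) ⟨hcon, by simp, by
      rw [hcard]; nlinarith⟩ hsub (Set.mem_insert _ _)
    simp [this]
  refine ⟨D, hD, ?_, ?_⟩
  · have : (cl G D).ncard ≤ Nat.card V := by
      rw [← Set.ncard_univ]; exact Set.ncard_le_ncard (Set.subset_univ _)
    omega
  · intro v
    by_contra hcon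
    push Not at hcon
    obtain ⟨hvD0, hvd, hone⟩ := hcon
    have hv2 : v ∉ cl G D := by
      rintro (h | ⟨d, hd, h⟩)
      · exact hvD0 h
      · exact hvd d hd h
    obtain ⟨x, hx, hvx⟩ := (hcl v).resolve_right hv2
    have hxD : x ∉ D := fun h => hvd x h hvx
    obtain ⟨d, hd, hxd⟩ := hx.resolve_left hxD
    have hvD : v ∉ insert x D := by
      rintro (h | h)
      · exact hvx.ne h
      · exact hvD0 h
    have hcon := con_insert (con_insert hD hxD hd hxd) hvD (Set.mem_insert _ _) hvx
    have hsub : D ⊆ insert v (insert x D) := fun y hy => by simp [hy]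
    have hcard : (insert v (insert x D)).ncard = D.ncard + 2 := by
      rw [Set.ncard_insert_of_notMem hvD, Set.ncard_insert_of_notMem hxD]
    have hdisj : Disjoint (cl G D) (insert v (G.neighborSet v) \ {x}) := by
      rw [Set.disjoint_right]
      rintro y ⟨rfl | hy, hyx⟩
      · exact hv2
      · rintro (h | ⟨d', hd', hyd'⟩)
        · exact hvd y h hy
        · exact hone x y (fun h => hyx h.symm) hvx hy ⟨d, hd, hxd⟩ d' hd' hyd'
    have hU : cl G D ∪ (insert v (G.neighborSet v) \ {x}) ⊆ cl G (insert v (insert x D)) := by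
      apply Set.union_subset (cl_mono hsub)
      rintro y ⟨rfl | hy, _⟩
      · exact Or.inl (Set.mem_insert _ _)
      · exact Or.inr ⟨v, Set.mem_insert _ _, hy.symm⟩
    have h5 := Set.ncard_le_ncard hU
    rw [Set.ncard_union_eq hdisj] at h5
    have h6 := nb v
    have h7 : (insert v (G.neighborSet v) \ {x}).ncard + 1 = (insert v (G.neighborSet v)).ncard :=
      Set.ncard_sdiff_singleton_add_one (Or.inr hvx)
    have := hmax (y := insert v (insert x D)) ⟨hcon, by simp, by
      rw [hcard]; nlinarith⟩ hsub (Set.mem_insert _ _)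
    exact hvD0 this

end RCProof

/-- For every finite connected graph of order `n` and minimum degree
`δ`, `rc(G) ≤ 3n/(δ + 1) + 3`. -/
theorem stmt_15 {V : Type*} [Fintype V] (G : SimpleGraph V) (hG : G.Connected)
    (δ : ℕ) (hδ : ∀ v : V, δ ≤ deg G v) :
    (rc G : ℝ) ≤ 3 * (Fintype.card V : ℝ) / (δ + 1) + 3 := by
  have hpos : (0 : ℝ) < (δ : ℝ) + 1 := by positivity
  suffices h : (δ + 1) * rc G ≤ 3 * Fintype.card V + 3 * (δ + 1) by
    have h' : ((δ : ℝ) + 1) * rc G ≤ 3 * Fintype.card V + 3 * (δ + 1) := by exact_mod_cast h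
    have h3 : 3 * (Fintype.card V : ℝ) / (δ + 1) + 3
        = (3 * Fintype.card V + 3 * (δ + 1)) / (δ + 1) := by field_simp
    rw [h3, le_div_iff₀ hpos]
    linarith
  by_cases h2 : 2 ≤ δ
  · obtain ⟨D, ⟨k, hk, c₀, hc₀⟩, hcard, hdom⟩ := RCProof.exists_dom hG δ hδ h2
    obtain ⟨c, hc1, hc2⟩ := RCProof.extend G D k c₀ hc₀ (fun v x => by
      obtain ⟨y, hy, hne⟩ := Set.exists_ne_of_one_lt_ncard
        (lt_of_lt_of_le (by omega : 1 < δ) (hδ v)) x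
      exact ⟨y, hne, hy⟩) hdom
    have hrc : rc G ≤ k + 6 := Nat.sInf_le ⟨c, fun e _ => hc1 e, hc2⟩
    rw [hk, Nat.card_eq_fintype_card] at hcard
    nlinarith
  · obtain ⟨k, hk, c₀, hc₀⟩ := RCProof.con_univ hG
    rw [Set.ncard_univ, Nat.card_eq_fintype_card] at hk
    have hrc : rc G ≤ k + 1 := by
      refine Nat.sInf_le ⟨fun e => min (c₀ e) k, fun e _ => by dsimp only; omega, ?_⟩
      intro u v
      apply RCProof.path_of_walk
      obtain ⟨p, _, h3, h4⟩ := hc₀ u (Set.mem_univ _) v (Set.mem_univ _)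
      refine ⟨p, ?_⟩
      rw [List.map_congr_left (g := c₀) (fun e he => by have := h4 e he; omega)]
      exact h3
    have : δ = 0 ∨ δ = 1 := by omega
    rcases this with rfl | rfl <;> omega
end

section
/- Let G be a finite connected simple chordal graph with no bridges, and let v be a vertex of G of eccentricity r. Then for every l ∈ {0, 1, …, r}, the induced subgraph of G on the set of vertices at graph distance at most l from v is a connected chordal graph with no bridges. -/
open SimpleGraph Set

lemma exists_pred_level {V : Type*} (G : SimpleGraph V) (hG : G.Connected) (v w : V)
    (h : G.dist v w ≠ 0) : ∃ u, G.Adj u w ∧ G.dist v u + 1 = G.dist v w := by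
  obtain ⟨p, hp⟩ := hG.exists_walk_length_eq_dist v w
  have hpos : 0 < p.length := by omega
  refine ⟨p.getVert (p.length - 1), ?_, ?_⟩
  · have := p.adj_getVert_succ (i := p.length - 1) (by omega)
    rwa [Nat.sub_add_cancel hpos, p.getVert_length] at this
  · have h1 := G.dist_le (p.take (p.length - 1))
    rw [Walk.take_length] at h1
    have h2 : G.Adj (p.getVert (p.length - 1)) w := by
      have := p.adj_getVert_succ (i := p.length - 1) (by omega)
      rwa [Nat.sub_add_cancel hpos, p.getVert_length] at this
    have h3 := hG.dist_triangle (u := v) (v := p.getVert (p.length - 1)) (w := w)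
    rw [dist_eq_one_iff_adj.mpr h2] at h3
    omega

lemma ball_reachable {V : Type*} (G : SimpleGraph V) (hG : G.Connected) (v : V) (l : ℕ)
    (H : SimpleGraph {w : V | G.dist v w ≤ l})
    (hH : ∀ a b : {w : V | G.dist v w ≤ l}, G.Adj a b → G.dist v a + 1 = G.dist v b → H.Adj a b) :
    ∀ (k : ℕ) (w : {w : V | G.dist v w ≤ l}), G.dist v w = k →
      H.Reachable ⟨v, by simp⟩ w := by
  intro k
  induction k with
  | zero =>
    rintro ⟨w, hw⟩ h
    have : v = w := (hG.dist_eq_zero_iff).mp h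
    subst this
    exact Reachable.refl _
  | succ k ih =>
    rintro ⟨w, hw⟩ h
    simp only at h
    obtain ⟨u, hu, hd⟩ := exists_pred_level G hG v w (by omega)
    have hw' : G.dist v w ≤ l := hw
    have hul : u ∈ {w : V | G.dist v w ≤ l} := by
      simp only [Set.mem_ofPred_eq]; omega
    exact (ih ⟨u, hul⟩ (by simp only; omega)).trans (hH ⟨u, hul⟩ ⟨w, hw⟩ hu hd).reachable

lemma exists_triangle {V : Type*} (G : SimpleGraph V) (hG : G.Connected)
    (hchordal : IsChordal G) (x y : V) (hxy : G.Adj x y) (hb : ¬ G.IsBridge s(x, y)) :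
    ∃ z, G.Adj x z ∧ G.Adj z y := by
  have hG' : (G.deleteEdges {s(x, y)}).Connected := hG.connected_delete_edge_of_not_isBridge hb
  set G' := G.deleteEdges {s(x, y)} with hG'def
  have hadj : ∀ a b, G'.Adj a b ↔ G.Adj a b ∧ s(a, b) ≠ s(x, y) := by
    intro a b; simp [hG'def, deleteEdges_adj]
  obtain ⟨p, hp⟩ := hG'.exists_walk_length_eq_dist x y
  have hn0 : p.length ≠ 0 := by
    intro h
    exact hxy.ne (Walk.eq_of_length_eq_zero h)
  have hn1 : p.length ≠ 1 := by
    intro h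
    have := dist_eq_one_iff_adj.mp (hp.symm.trans h)
    exact ((hadj _ _).mp this).2 rfl
  have hD : ∀ i, i ≤ p.length → G'.dist x (p.getVert i) = i := by
    intro i hi
    have h1 := G'.dist_le (p.take i)
    have h2 := G'.dist_le (p.drop i)
    rw [Walk.take_length] at h1
    rw [Walk.drop_length] at h2
    have h3 := hG'.dist_triangle (u := x) (v := p.getVert i) (w := y)
    omega
  have hstep : ∀ i, i < p.length → G.Adj (p.getVert i) (p.getVert (i + 1)) := fun i hi =>
    ((hadj _ _).mp (p.adj_getVert_succ hi)).1
  have hinj : ∀ i j, i ≤ p.length → j ≤ p.length → p.getVert i = p.getVert j → i = j := by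
    intro i j hi hj h
    rw [← hD i hi, ← hD j hj, h]
  have key : ∀ i j, i < j → j ≤ p.length → (G.Adj (p.getVert i) (p.getVert j) ↔
      (j = i + 1 ∨ (i = 0 ∧ j = p.length))) := by
    intro i j hij hj
    constructor
    · intro h
      by_cases he : s(p.getVert i, p.getVert j) = s(x, y)
      · right
        rw [Sym2.eq_iff] at he
        rcases he with ⟨h1, h2⟩ | ⟨h1, h2⟩
        · exact ⟨hinj i 0 (by omega) (by omega) (by simpa using h1),
            hinj j p.length hj le_rfl (by simpa using h2)⟩
        · have := hinj j 0 hj (by omega) (by simpa using h2)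
          omega
      · left
        have h' : G'.Adj (p.getVert i) (p.getVert j) := (hadj _ _).mpr ⟨h, he⟩
        have h3 := hG'.dist_triangle (u := x) (v := p.getVert i) (w := p.getVert j)
        rw [dist_eq_one_iff_adj.mpr h', hD i (by omega), hD j hj] at h3
        omega
    · rintro (rfl | ⟨rfl, rfl⟩)
      · exact hstep i (by omega)
      · simpa using hxy
  by_cases hn2 : p.length = 2
  · refine ⟨p.getVert 1, ?_, ?_⟩
    · simpa using hstep 0 (by omega)
    · have := hstep 1 (by omega)
      have h2 : p.getVert (1 + 1) = y := by
        have := p.getVert_length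
        rwa [hn2] at this
      rwa [h2] at this
  · exfalso
    refine (hchordal (p.length + 1) (by omega)).false ⟨⟨fun i => p.getVert i.val, ?_⟩, ?_⟩
    · intro i j h
      exact Fin.ext (hinj i j (by omega) (by omega) h)
    · intro i j
      change G.Adj (p.getVert i.val) (p.getVert j.val) ↔ _
      rw [cycleGraph_adj']
      have hi := i.isLt
      have hj := j.isLt
      rcases lt_trichotomy i j with h | h | h
      · rw [key i j h (by omega), Fin.coe_sub_iff_lt.mpr h, Fin.sub_val_of_le h.le]
        have h' : i.val < j.val := h
        omega
      · subst h
        simp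
      · rw [G.adj_comm, key j i h (by omega), Fin.coe_sub_iff_lt.mpr h, Fin.sub_val_of_le h.le]
        have h' : j.val < i.val := h
        omega

/-- If `v` is a vertex of eccentricity `r` in a finite connected
bridge-less chordal graph `G`, then for every `l ≤ r` the induced subgraph on the ball of
radius `l` around `v` is a connected bridge-less chordal graph. -/
theorem stmt_16 {V : Type*} [Fintype V] (G : SimpleGraph V) (hG : G.Connected)
    (hchordal : IsChordal G) (hbf : ∀ e : Sym2 V, ¬ G.IsBridge e)
    (v : V) (r : ℕ) (hr : ecc G v = r) (l : ℕ) (hl : l ≤ r) :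
    (G.induce {w : V | G.dist v w ≤ l}).Connected ∧
    IsChordal (G.induce {w : V | G.dist v w ≤ l}) ∧
    ∀ e, ¬ (G.induce {w : V | G.dist v w ≤ l}).IsBridge e := by
  have hpre : (G.induce {w : V | G.dist v w ≤ l}).Preconnected := by
    intro a b
    have h := ball_reachable G hG v l (G.induce _) (fun a b h _ => h)
    exact (h _ a rfl).symm.trans (h _ b rfl)
  refine ⟨(connected_iff _).mpr ⟨hpre, ⟨⟨v, by simp⟩⟩⟩, ?_, ?_⟩
  · intro n hn
    exact ⟨fun f => (hchordal n hn).false (f.trans (Embedding.induce _))⟩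
  · intro e
    induction e with
    | _ x y =>
    intro hb
    have hadj := hb.reachable_iff_adj.mp (hpre x y)
    have hxy : G.Adj x y := hadj
    rw [isBridge_iff] at hb
    apply hb
    by_cases hd : G.dist v x = G.dist v y
    · have h := ball_reachable G hG v l
        ((G.induce {w : V | G.dist v w ≤ l}).deleteEdges {s(x, y)}) (by
          intro a b hab hlev
          rw [deleteEdges_adj]
          refine ⟨hab, ?_⟩
          rw [Set.mem_singleton_iff, Sym2.eq_iff]
          rintro (⟨rfl, rfl⟩ | ⟨rfl, rfl⟩) <;> omega)
      exact (h _ x rfl).symm.trans (h _ y rfl)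
    · obtain ⟨z, hxz, hzy⟩ := exists_triangle G hG hchordal x y hxy (hbf _)
      have hx : G.dist v x ≤ l := x.2
      have hy : G.dist v y ≤ l := y.2
      have h1 := hG.dist_triangle (u := v) (v := x) (w := z)
      have h2 := hG.dist_triangle (u := v) (v := y) (w := z)
      rw [dist_eq_one_iff_adj.mpr hxz] at h1
      rw [dist_eq_one_iff_adj.mpr hzy.symm] at h2
      have hz : z ∈ {w : V | G.dist v w ≤ l} := by
        simp only [Set.mem_ofPred_eq]; omega
      have e1 : ((G.induce {w : V | G.dist v w ≤ l}).deleteEdges {s(x, y)}).Adj x ⟨z, hz⟩ := by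
        rw [deleteEdges_adj]
        refine ⟨hxz, ?_⟩
        rw [Set.mem_singleton_iff, Sym2.eq_iff]
        rintro (⟨_, rfl⟩ | ⟨rfl, _⟩)
        · exact hzy.ne rfl
        · exact hxy.ne rfl
      have e2 : ((G.induce {w : V | G.dist v w ≤ l}).deleteEdges {s(x, y)}).Adj ⟨z, hz⟩ y := by
        rw [deleteEdges_adj]
        refine ⟨hzy, ?_⟩
        rw [Set.mem_singleton_iff, Sym2.eq_iff]
        rintro (⟨rfl, _⟩ | ⟨_, rfl⟩)
        · exact hxz.ne rfl
        · exact hxy.ne rfl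
      exact e1.reachable.trans e2.reachable
end

section
/- Every finite connected simple interval graph G that is not a complete graph contains a dominating path of length at most diam(G) − 2, i.e., a path P on at most diam(G) − 1 vertices such that every vertex of G is in P or adjacent to a vertex of P. -/
open SimpleGraph Set

/-- A walk in an interval graph covers every point between its ends. -/
theorem walk_cover {V : Type*} (G : SimpleGraph V) (a b : V → ℝ)
    (hadj : ∀ u v : V, G.Adj u v → a v ≤ b u) (c : ℝ) {u w : V} (p : G.Walk u w) :
    a u ≤ c → c ≤ b w → ∃ y ∈ p.support, a y ≤ c ∧ c ≤ b y := by
  induction p with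
  | nil => intro h1 h2; exact ⟨_, by simp, h1, h2⟩
  | @cons u v w h q ih =>
    intro h1 h2
    by_cases hc : c ≤ b u
    · exact ⟨u, by simp, h1, hc⟩
    · obtain ⟨y, hy, h3⟩ := ih ((hadj u v h).trans (not_le.mp hc).le) h2
      exact ⟨y, by simp [hy], h3⟩

/-- Every finite connected interval graph that is not complete has a
dominating path of length at most `diam(G) − 2`. -/
theorem stmt_17 {V : Type*} [Fintype V] (G : SimpleGraph V) (hG : G.Connected)
    (hint : IsIntervalGraph G)
    (hnc : ∃ u v : V, u ≠ v ∧ ¬ G.Adj u v) :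
    ∃ (u w : V) (p : G.Walk u w), p.IsPath ∧
      (p.length : ℤ) ≤ (graphDiam G : ℤ) - 2 ∧
      ∀ x : V, x ∈ p.support ∨ ∃ y ∈ p.support, G.Adj y x := by
  classical
  obtain ⟨a, b, hab, hI⟩ := hint
  have hI' : ∀ u v : V, u ≠ v → (G.Adj u v ↔ a u ≤ b v ∧ a v ≤ b u) := by
    intro u v huv
    rw [hI u v huv]
    constructor
    · rintro ⟨x, ⟨h1, h2⟩, h3, h4⟩
      exact ⟨h1.trans h4, h3.trans h2⟩
    · rintro ⟨h1, h2⟩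
      exact ⟨max (a u) (a v), ⟨le_max_left _ _, max_le (hab u) h2⟩,
        le_max_right _ _, max_le h1 (hab v)⟩
  have hadj : ∀ u v : V, G.Adj u v → a v ≤ b u := fun u v h => ((hI' u v h.ne).1 h).2
  haveI : Nonempty V := hG.nonempty
  obtain ⟨s, hs⟩ := Finite.exists_min b
  obtain ⟨t, ht⟩ := Finite.exists_max a
  have hst : b s < a t := by
    obtain ⟨u, v, huv, hn⟩ := hnc
    rw [hI' u v huv] at hn
    by_contra hc
    exact hn ⟨(ht u).trans ((not_lt.mp hc).trans (hs v)),
      (ht v).trans ((not_lt.mp hc).trans (hs u))⟩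
  have hdist : G.dist t s ≤ graphDiam G :=
    le_csSup (Set.finite_range fun p : V × V => G.dist p.1 p.2).bddAbove ⟨(t, s), rfl⟩
  obtain ⟨p, hp⟩ := hG.exists_walk_length_eq_dist t s
  rw [← hp] at hdist
  cases p with
  | nil => exact absurd hst (not_lt.mpr (hab _))
  | @cons _ y _ h q =>
    obtain ⟨q', hq'⟩ : ∃ q' : G.Walk s y, q'.length = q.length := ⟨q.reverse, by simp⟩
    cases q' with
    | nil => exact absurd hst (not_lt.mpr (hadj _ _ h.symm))
    | @cons _ z _ h' r =>
      refine ⟨z, y, r.bypass, r.bypass_isPath, ?_, ?_⟩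
      · have := r.length_bypass_le_length
        simp only [Walk.length_cons] at hq' hdist
        omega
      · intro x
        obtain ⟨w, hw, h1, h2⟩ := walk_cover G a b hadj (max (a x) (b s)) r.bypass
          ((hadj _ _ h').trans (le_max_right _ _))
          ((max_le (ht x) hst.le).trans (hadj _ _ h.symm))
        by_cases hwx : w = x
        · exact Or.inl (hwx ▸ hw)
        · exact Or.inr ⟨w, hw, (hI' w x hwx).2
            ⟨h1.trans (max_le (hab x) (hs x)), (le_max_left _ _).trans h2⟩⟩
end
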